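/- arXiv:math/0612668 — 2 statements merged into one kernel-verified Lean document; each statement's English description precedes it below -/
import Mathlib

section
/- In the ring ℤ[[z,u,T]] of formal power series in three commuting variables the following identity holds: Σ_λ T^{|λ|} · ∏_{boxes of d(λ)} u^{2l+1} · (1 − z^{a+1}u^{l})^{−1} · (1 − z^{a}u^{l+1})^{−1} = ∏_{r ≥ 1, s ≥ 0} (1 − z^{s}u^{r}T)^{−1}, where the sum is over all partitions λ (including the empty partition, contributing 1), the product on the left is over the boxes of the Ferrers diagram of λ with a and l the arm and leg length of the box, and both the infinite sum and the infinite product converge in the formal power series topology. (Substituting u = w^{−1}, this is the genus-0 identity Σ_λ T^{|λ|} ∏ ((z^{a+1}−w^{l})(z^{a}−w^{l+1}))^{−1} = ∏_{r>0, s≥0} (1 − z^{s}w^{−r}T)^{−1}.) -/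
namespace Statement17

/-- The product (formal power series) topology on `ℤ[[z,u,T]] = MvPowerSeries (Fin 3) ℤ`:
a sequence converges iff each coefficient eventually stabilizes (`ℤ` being discrete). -/
noncomputable instance : TopologicalSpace (MvPowerSeries (Fin 3) ℤ) :=
  inferInstanceAs (TopologicalSpace ((Fin 3 →₀ ℕ) → ℤ))

/-- `colLen p j`: the number of parts of `p` that are `> j` (length of column `j`). -/
def colLen {k : ℕ} (p : Nat.Partition k) (j : ℕ) : ℕ :=
  Multiset.card (p.parts.filter (fun a => j < a))

/-- `rowLen p i`: the `(i+1)`-st largest part of `p` (length of row `i`). -/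
def rowLen {k : ℕ} (p : Nat.Partition k) (i : ℕ) : ℕ :=
  ((Finset.range k).filter (fun j => i < colLen p j)).card

/-- The boxes `(i,j)` (row, column, `0`-indexed) of the Ferrers diagram of `p`. -/
def boxes {k : ℕ} (p : Nat.Partition k) : Finset (ℕ × ℕ) :=
  (Finset.range k ×ˢ Finset.range k).filter (fun b => b.2 < rowLen p b.1)

/-- Arm length of a box. -/
def armLength {k : ℕ} (p : Nat.Partition k) (b : ℕ × ℕ) : ℕ :=
  rowLen p b.1 - (b.2 + 1)

/-- Leg length of a box. -/
def legLength {k : ℕ} (p : Nat.Partition k) (b : ℕ × ℕ) : ℕ :=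
  colLen p b.2 - (b.1 + 1)

/-- The summand `T^{|λ|} ∏_{boxes} u^{2l+1}·(1−z^{a+1}u^{l})⁻¹·(1−z^{a}u^{l+1})⁻¹`
attached to a partition `λ`, in `ℤ[[z,u,T]]` with `z = X 0`, `u = X 1`, `T = X 2`;
the inverses are genuine inverses of the units `1 − z^{a+1}u^l` and `1 − z^a u^{l+1}`
(taken via `Ring.inverse`). -/
noncomputable def lhsTerm (p : Σ m : ℕ, Nat.Partition m) : MvPowerSeries (Fin 3) ℤ :=
  (MvPowerSeries.X 2 : MvPowerSeries (Fin 3) ℤ) ^ p.1 *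
    ∏ b ∈ boxes p.2,
      ((MvPowerSeries.X 1 : MvPowerSeries (Fin 3) ℤ) ^ (2 * legLength p.2 b + 1) *
        Ring.inverse (1 - (MvPowerSeries.X 0 : MvPowerSeries (Fin 3) ℤ) ^ (armLength p.2 b + 1)
            * MvPowerSeries.X 1 ^ legLength p.2 b) *
        Ring.inverse (1 - (MvPowerSeries.X 0 : MvPowerSeries (Fin 3) ℤ) ^ armLength p.2 b
            * MvPowerSeries.X 1 ^ (legLength p.2 b + 1)))

/-- The factor `(1 − z^{s}u^{r}T)⁻¹` indexed by `rs = (r−1, s)` with `r ≥ 1`, `s ≥ 0`. -/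
noncomputable def rhsFactor (rs : ℕ × ℕ) : MvPowerSeries (Fin 3) ℤ :=
  Ring.inverse (1 - (MvPowerSeries.X 0 : MvPowerSeries (Fin 3) ℤ) ^ rs.2
      * MvPowerSeries.X 1 ^ (rs.1 + 1) * MvPowerSeries.X 2)

/-!
Let `λ` range over the partitions with at most `N` rows and weight it by its hook product, times the
factor `1 - q ^ c * t ^ (N - i)` for each box `(i, c)`. The generating function `F` of these weights
by size satisfies `F (q * X) = (∏ j < N, (1 - t ^ j * X)) * F X`. Indeed, row-wise expansion of two
Vandermonde-like determinants evaluates the sum, over all sets of rows, of Macdonald's coefficients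
for shrinking (`q ^ |λ|`) and for growing (the product over `j`) those rows by one box; and the
weights satisfy detailed balance with respect to these coefficients.

Modulo a power of `q` the functional equation can be iterated until `F (0) = 1` appears on the left,
which gives `∏ i, ∏ j < N, (1 - q ^ i * t ^ j * X) * F X = 1`. For `q = z`, `t = u`, `X = u * T` and
modulo monomials of high multidegree, the dependence on `N` disappears once `N` is large.
-/

section VandermondeExpansions

open Matrix

variable {N : ℕ}

lemma det_powers_add_smul_powers {R : Type*} [CommRing R] (t : R) (x g : Fin N → R) :
    (of fun i j : Fin N => x i ^ (j : ℕ) + g i * (t * x i) ^ (j : ℕ)).det =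
      ∑ I : Finset (Fin N), (∏ i ∈ I, g i) * (vandermonde (I.piecewise (t • x) x)).det := by
  have split_rows := (detRowAlternating (R := R) (n := Fin N)).toMultilinearMap.map_add_univ
    (fun i j => g i * (t * x i) ^ (j : ℕ)) (fun i j => x i ^ (j : ℕ))
  have pull_out (I : Finset (Fin N)) :=
    (detRowAlternating (R := R) (n := Fin N)).toMultilinearMap.map_smul_univ
      (I.piecewise g 1) (vandermonde (I.piecewise (t • x) x))
  have rows_eq (I : Finset (Fin N)) :
      I.piecewise (fun i (j : Fin N) => g i * (t * x i) ^ (j : ℕ)) (fun i j => x i ^ (j : ℕ)) =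
        fun i => I.piecewise g 1 i • vandermonde (I.piecewise (t • x) x) i := by
    ext i j
    by_cases hi : i ∈ I <;> simp [hi, vandermonde_apply]
  calc _ = _ := by rw [← split_rows]; exact congrArg det (by ext; simp [add_comm])
    _ = _ := Finset.sum_congr rfl fun I _ => by
      rw [rows_eq]
      exact (pull_out I).trans (by simp [Finset.prod_piecewise]; rfl)

lemma sum_pow_card_mul_det_vandermonde {R : Type*} [CommRing R] (v t : R) (x : Fin N → R) :
    ∑ I : Finset (Fin N), v ^ I.card * (vandermonde (I.piecewise (t • x) x)).det =
      (∏ j ∈ Finset.range N, (1 + v * t ^ j)) * (vandermonde x).det := by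
  have factor : (of fun i j : Fin N => x i ^ (j : ℕ) + v * (t * x i) ^ (j : ℕ)) =
      vandermonde x * diagonal fun j : Fin N => 1 + v * t ^ (j : ℕ) := by
    ext i j
    simp only [of_apply, mul_diagonal, vandermonde_apply]
    ring
  have expansion := det_powers_add_smul_powers t x fun _ => v
  rw [factor, det_mul, det_diagonal, Fin.prod_univ_eq_prod_range (fun j => 1 + v * t ^ j)]
    at expansion
  simpa only [Finset.prod_const, mul_comm] using expansion.symm

lemma sum_prod_inv_sub_one_mul_det_vandermonde {K : Type*} [Field K] {t : K} (ht : t ≠ 0)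
    {y : Fin N → K} (hy : ∀ i, y i ≠ 0) :
    ∑ I : Finset (Fin N),
        (∏ i ∈ I, ((y i)⁻¹ - 1) / t ^ (N - 1)) * (vandermonde (I.piecewise (t • y) y)).det =
      (∏ i : Fin N, (y i * t ^ (i.rev : ℕ))⁻¹) * (vandermonde y).det := by
  let U : Matrix (Fin N) (Fin N) K := of fun k j =>
    (if k = j then (t ^ (j.rev : ℕ))⁻¹ else 0) +
      if (k : ℕ) = j + 1 then 1 - (t ^ (j.rev : ℕ))⁻¹ else 0
  have det_U : U.det = ∏ j : Fin N, (t ^ (j.rev : ℕ))⁻¹ := by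
    rw [det_of_isLowerTriangular]
    · simp [U]
    · intro i j (hij : i < j)
      simp [U, hij.ne, show (i : ℕ) ≠ j + 1 by omega]
  have vandermonde_mul_U (i j : Fin N) : (vandermonde y * U) i j =
      y i ^ (j : ℕ) * (t ^ (j.rev : ℕ))⁻¹ + y i ^ (j + 1 : ℕ) * (1 - (t ^ (j.rev : ℕ))⁻¹) := by
    simp only [mul_apply, vandermonde_apply, U, of_apply, mul_add, Finset.sum_add_distrib]
    congr 1
    · simp
    by_cases hj : (j : ℕ) + 1 < N
    · rw [Finset.sum_eq_single ⟨j + 1, hj⟩] <;> simp +contextual [Fin.ext_iff]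
    · simp [show N - (j + 1 : ℕ) = 0 by omega]
  have factor : (of fun i j : Fin N => y i ^ (j : ℕ) + ((y i)⁻¹ - 1) / t ^ (N - 1) *
      (t * y i) ^ (j : ℕ)) = diagonal (fun i => (y i)⁻¹) * (vandermonde y * U) := by
    ext i j
    have hN : t ^ (N - 1) = t ^ (j.rev : ℕ) * t ^ (j : ℕ) := by
      rw [← pow_add]; congr 1; simp only [Fin.val_rev]; omega
    rw [diagonal_mul, vandermonde_mul_U, of_apply, hN]
    field_simp [hy i]
    ring
  rw [← det_powers_add_smul_powers, factor, det_mul, det_mul, det_diagonal, det_U]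
  simp only [mul_inv, Finset.prod_mul_distrib]
  ring

end VandermondeExpansions

section Weights

/-- All hook factors `1 - q ^ a * t ^ b` with `(a, b) ≠ (0, 0)` are invertible; this genericity
of the parameters is what the inverses in the hook product require. -/
def HookFactorsInvertible {R : Type*} [CommRing R] (q t : R) : Prop :=
  ∀ a b : ℕ, a + b ≠ 0 → IsUnit (1 - q ^ a * t ^ b)

/-- The contribution to the hook product of a box with arm length `a` and leg length `l`. -/
noncomputable def boxWeight {R : Type*} [CommRing R] (q t : R) (a l : ℕ) : R :=
  t ^ (2 * l) * Ring.inverse (1 - q ^ (a + 1) * t ^ l) * Ring.inverse (1 - q ^ a * t ^ (l + 1))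

variable {K : Type*} [Field K] {N : ℕ} (q t : K)

/-- The contribution to `seqWeight` of a row of length `r` with `e` rows below it, all of them
regarded as empty. -/
def rowWeight (e r : ℕ) : K :=
  ∏ a ∈ Finset.range r, t ^ (2 * e) / (1 - q ^ (a + 1) * t ^ e)

/-- The contribution to `seqWeight` of two rows with `d` rows strictly between them, the upper
one being longer by `r`. -/
noncomputable def pairWeight (d r : ℕ) : K :=
  ∏ a ∈ Finset.range r, boxWeight q t a d / boxWeight q t a (d + 1)

/-- The hook product of the partition with row lengths `l`, times the factors
`1 - q ^ c * t ^ (N - i)` over its boxes `(i, c)`, in a form that factors over rows and pairs of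
rows. -/
noncomputable def seqWeight (l : Fin N → ℕ) : K :=
  ∏ i : Fin N, (rowWeight q t i.rev (l i) *
    ∏ j ∈ Finset.Ioi i, pairWeight q t (j - (i + 1)) (l i - l j))

/-- The specialization `x_i = q ^ λ_i * t ^ (N - i)` (with `1`-based `i`) at which Macdonald
polynomials of `N` variables are evaluated. -/
def macdonaldPoint (l : Fin N → ℕ) (i : Fin N) : K :=
  q ^ l i * t ^ (i.rev : ℕ)

/-- The coefficient of the shift `x_i ↦ q x_i`, `i ∈ I`, in Macdonald's `q`-difference
operators, as a ratio of Vandermonde determinants. -/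
noncomputable def macdonaldCoeff (x : Fin N → K) (I : Finset (Fin N)) : K :=
  (Matrix.vandermonde (I.piecewise (t • x) x)).det / (Matrix.vandermonde x).det

/-- The coefficient with which the rows in `I` gain a box. -/
noncomputable def growCoeff (m : Fin N → ℕ) (I : Finset (Fin N)) : K :=
  (-1) ^ I.card * macdonaldCoeff t (macdonaldPoint q t m) I

/-- The coefficient with which the rows in `I` lose a box. -/
noncomputable def shrinkCoeff (l : Fin N → ℕ) (I : Finset (Fin N)) : K :=
  (∏ i ∈ I, (macdonaldPoint q t l i - 1) / t ^ (N - 1)) *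
    macdonaldCoeff t (macdonaldPoint q t l)⁻¹ I

variable {q t}

lemma HookFactorsInvertible.ne_zero (h : HookFactorsInvertible q t) {a b : ℕ} (hab : a + b ≠ 0) :
    1 - q ^ a * t ^ b ≠ 0 :=
  (h a b hab).ne_zero

lemma boxWeight_ne_zero (ht : t ≠ 0) (h : HookFactorsInvertible q t) (a l : ℕ) :
    boxWeight q t a l ≠ 0 := by
  simp [boxWeight, Ring.inverse_eq_inv, ht, h.ne_zero (show a + 1 + l ≠ 0 by omega),
    h.ne_zero (show a + (l + 1) ≠ 0 by omega)]

lemma macdonaldPoint_ne_zero (hq : q ≠ 0) (ht : t ≠ 0) (l : Fin N → ℕ) (i : Fin N) :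
    macdonaldPoint q t l i ≠ 0 :=
  mul_ne_zero (pow_ne_zero _ hq) (pow_ne_zero _ ht)

lemma macdonaldPoint_eq_mul {l : Fin N → ℕ} {i j : Fin N} (hl : l j ≤ l i) (hij : i < j) :
    macdonaldPoint q t l i =
      q ^ (l i - l j) * t ^ (j - (i + 1) + 1 : ℕ) * macdonaldPoint q t l j := by
  have hq : q ^ l i = q ^ (l i - l j) * q ^ l j := by rw [← pow_add, Nat.sub_add_cancel hl]
  have ht : t ^ (i.rev : ℕ) = t ^ (j - (i + 1) + 1 : ℕ) * t ^ (j.rev : ℕ) := by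
    rw [← pow_add]; congr 1; simp only [Fin.val_rev]; omega
  rw [macdonaldPoint, macdonaldPoint, hq, ht]
  ring

lemma macdonaldPoint_injective (hq : q ≠ 0) (ht : t ≠ 0) (h : HookFactorsInvertible q t)
    {l : Fin N → ℕ} (hl : Antitone l) : (macdonaldPoint q t l).Injective := by
  refine .of_lt_imp_ne fun i j hij heq => ?_
  have hne := h.ne_zero (show (l i - l j) + (j - (i + 1) + 1 : ℕ) ≠ 0 by omega)
  rw [macdonaldPoint_eq_mul (hl hij.le) hij] at heq
  exact hne (sub_eq_zero.2 (mul_right_cancel₀ (macdonaldPoint_ne_zero hq ht l j)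
    (heq.trans (one_mul _).symm)).symm)

lemma det_vandermonde_macdonaldPoint_ne_zero (hq : q ≠ 0) (ht : t ≠ 0)
    (h : HookFactorsInvertible q t) {l : Fin N → ℕ} (hl : Antitone l) :
    (Matrix.vandermonde (macdonaldPoint q t l)).det ≠ 0 :=
  Matrix.det_vandermonde_ne_zero_iff.2 (macdonaldPoint_injective hq ht h hl)

lemma det_vandermonde_inv_macdonaldPoint_ne_zero (hq : q ≠ 0) (ht : t ≠ 0)
    (h : HookFactorsInvertible q t) {l : Fin N → ℕ} (hl : Antitone l) :
    (Matrix.vandermonde (macdonaldPoint q t l)⁻¹).det ≠ 0 :=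
  Matrix.det_vandermonde_ne_zero_iff.2 (inv_injective.comp (macdonaldPoint_injective hq ht h hl))

lemma sum_shrinkCoeff (hq : q ≠ 0) (ht : t ≠ 0) (h : HookFactorsInvertible q t)
    {l : Fin N → ℕ} (hl : Antitone l) : ∑ I, shrinkCoeff q t l I = q ^ ∑ i, l i := by
  have expansion := sum_prod_inv_sub_one_mul_det_vandermonde ht
    (y := (macdonaldPoint q t l)⁻¹) fun i => inv_ne_zero (macdonaldPoint_ne_zero hq ht l i)
  have prod_eq : ∏ i : Fin N, ((macdonaldPoint q t l)⁻¹ i * t ^ (i.rev : ℕ))⁻¹ = q ^ ∑ i, l i := by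
    rw [← Finset.prod_pow_eq_pow_sum]
    refine Finset.prod_congr rfl fun i _ => ?_
    simp only [Pi.inv_apply, macdonaldPoint]
    field_simp
  simp only [shrinkCoeff, macdonaldCoeff, mul_div_assoc', ← Finset.sum_div]
  rw [div_eq_iff (det_vandermonde_inv_macdonaldPoint_ne_zero hq ht h hl), ← prod_eq, ← expansion]
  simp only [Pi.inv_apply, inv_inv]

open PowerSeries in
lemma sum_C_growCoeff_mul_X_pow (hq : q ≠ 0) (ht : t ≠ 0) (h : HookFactorsInvertible q t)
    {m : Fin N → ℕ} (hm : Antitone m) :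
    ∑ I : Finset (Fin N), C (growCoeff q t m I) * X ^ I.card =
      ∏ j ∈ Finset.range N, (1 - C (t ^ j) * (X : K⟦X⟧)) := by
  set x := macdonaldPoint q t m
  have map_vandermonde (v : Fin N → K) :
      (Matrix.vandermonde fun i => (C (v i) : K⟦X⟧)).det = C (Matrix.vandermonde v).det := by
    simp [Matrix.det_vandermonde, map_prod]
  have map_piecewise (I : Finset (Fin N)) :
      I.piecewise ((C t : K⟦X⟧) • fun i => C (x i)) (fun i => C (x i)) =
        fun i => C (I.piecewise (t • x) x i) := by
    ext1 i
    by_cases hi : i ∈ I <;> simp [hi]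
  have expansion := sum_pow_card_mul_det_vandermonde (-X : K⟦X⟧) (C t) fun i => C (x i)
  simp only [map_piecewise, map_vandermonde] at expansion
  have hV : (Matrix.vandermonde x).det ≠ 0 := det_vandermonde_macdonaldPoint_ne_zero hq ht h hm
  refine mul_right_cancel₀ ((map_ne_zero_iff C C_injective).2 hV) ?_
  calc _ = ∑ I : Finset (Fin N),
        (-X) ^ I.card * C (Matrix.vandermonde (I.piecewise (t • x) x)).det := by
        rw [Finset.sum_mul]
        refine Finset.sum_congr rfl fun I _ => ?_
        rw [mul_right_comm, ← map_mul, growCoeff, macdonaldCoeff, mul_assoc,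
          div_mul_cancel₀ _ hV, neg_pow X, map_mul, map_pow, map_neg, map_one]
        ring
    _ = _ := by
        rw [expansion]
        congr 1
        exact Finset.prod_congr rfl fun j _ => by rw [map_pow]; ring

end Weights

section DetailedBalance

variable {K : Type*} [Field K] {N : ℕ} {q t : K}

/-- The factors by which the nodes are scaled when the rows in `I` are shifted. -/
def stripScale (t : K) (I : Finset (Fin N)) : Fin N → K :=
  I.piecewise (fun _ => t) 1

lemma pairWeight_succ_mul (ht : t ≠ 0) (h : HookFactorsInvertible q t) (d r : ℕ) :
    pairWeight q t d (r + 1) *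
        ((q ^ (r + 1) * t ^ (d + 1) - t) / (q ^ (r + 1) * t ^ (d + 1) - 1)) * t =
      pairWeight q t d r * ((t * (q ^ r * t ^ (d + 1)) - 1) / (q ^ r * t ^ (d + 1) - 1)) := by
  have h₁ := h.ne_zero (show r + 1 + d ≠ 0 by omega)
  have h₂ := h.ne_zero (show r + (d + 1) ≠ 0 by omega)
  have h₃ := h.ne_zero (show r + 1 + (d + 1) ≠ 0 by omega)
  have h₄ := h.ne_zero (show r + (d + 2) ≠ 0 by omega)
  have ratio : boxWeight q t r d / boxWeight q t r (d + 1) =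
      ((1 - q ^ (r + 1) * t ^ (d + 1)) * (1 - q ^ r * t ^ (d + 2))) /
        (t ^ 2 * ((1 - q ^ (r + 1) * t ^ d) * (1 - q ^ r * t ^ (d + 1)))) := by
    simp only [boxWeight, Ring.inverse_eq_inv, mul_add, pow_add t (2 * d)]
    field_simp
  have hn₂ : q ^ r * t ^ (d + 1) - 1 = -(1 - q ^ r * t ^ (d + 1)) := by ring
  have hn₃ : q ^ (r + 1) * t ^ (d + 1) - 1 = -(1 - q ^ (r + 1) * t ^ (d + 1)) := by ring
  rw [pairWeight, Finset.prod_range_succ, ← pairWeight, ratio, hn₂, hn₃]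
  field_simp
  ring

lemma rowWeight_succ_mul (ht : t ≠ 0) (h : HookFactorsInvertible q t) (i : Fin N) (r : ℕ) :
    rowWeight q t i.rev (r + 1) * ((q ^ (r + 1) * t ^ (i.rev : ℕ) - 1) / t ^ (N - 1)) *
        t ^ (i : ℕ) =
      rowWeight q t i.rev r * -1 * t ^ (i.rev : ℕ) := by
  have hne := h.ne_zero (show r + 1 + (i.rev : ℕ) ≠ 0 by omega)
  have hneg : q ^ (r + 1) * t ^ (i.rev : ℕ) - 1 = -(1 - q ^ (r + 1) * t ^ (i.rev : ℕ)) := by ring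
  have hN : t ^ (N - 1) = t ^ (i.rev : ℕ) * t ^ (i : ℕ) := by
    rw [← pow_add]; congr 1; simp only [Fin.val_rev]; omega
  rw [rowWeight, Finset.prod_range_succ, ← rowWeight, hN, hneg, two_mul, pow_add t (i.rev : ℕ)]
  generalize 1 - q ^ (r + 1) * t ^ (i.rev : ℕ) = D at hne
  field_simp

lemma div_sub_eq_of_eq_mul {ρ x y : K} (hy : y ≠ 0) (hx : x = ρ * y) (a b : K) :
    (b * y - a * x) / (y - x) = (a * ρ - b) / (ρ - 1) := by
  rw [hx, ← neg_div_neg_eq, ← mul_div_mul_right (a * ρ - b) _ hy]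
  congr 1 <;> ring

lemma inv_div_sub_eq_of_eq_mul {ρ x y : K} (hx : x ≠ 0) (hxy : x = ρ * y) (a b : K) :
    (b * y⁻¹ - a * x⁻¹) / (y⁻¹ - x⁻¹) = (b * ρ - a) / (ρ - 1) := by
  have hρ : ρ ≠ 0 := left_ne_zero_of_mul (hxy ▸ hx)
  have hy : y ≠ 0 := right_ne_zero_of_mul (hxy ▸ hx)
  rw [← neg_div_neg_eq, neg_sub, neg_sub,
    div_sub_eq_of_eq_mul (inv_ne_zero hx) (ρ := ρ) (by rw [hxy]; field_simp)]

lemma macdonaldCoeff_eq_prod (x : Fin N → K) (I : Finset (Fin N)) :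
    macdonaldCoeff t x I = ∏ i, ∏ j ∈ Finset.Ioi i,
      (stripScale t I j * x j - stripScale t I i * x i) / (x j - x i) := by
  have scale (i : Fin N) : I.piecewise (t • x) x i = stripScale t I i * x i := by
    by_cases hi : i ∈ I <;> simp [stripScale, hi]
  simp only [macdonaldCoeff, Matrix.det_vandermonde, scale, Finset.prod_div_distrib]

lemma prod_prod_Ioi_fst (f : Fin N → K) :
    ∏ i, ∏ _j ∈ Finset.Ioi i, f i = ∏ i, f i ^ (i.rev : ℕ) := by
  simp [Nat.sub_sub, add_comm]

lemma prod_prod_Ioi_snd (f : Fin N → K) :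
    ∏ i, ∏ j ∈ Finset.Ioi i, f j = ∏ i, f i ^ (i : ℕ) := by
  rw [Finset.prod_comm' (t' := Finset.univ) (s' := Finset.Iio) (by simp)]
  simp

variable {m l : Fin N → ℕ} {I : Finset (Fin N)}

lemma prod_pairWeight_mul_macdonaldCoeff (hq : q ≠ 0) (ht : t ≠ 0)
    (h : HookFactorsInvertible q t) (hl : Antitone l) (hm : Antitone m)
    (hlm : l = I.piecewise (m + 1) m) :
    (∏ i : Fin N, ∏ j ∈ Finset.Ioi i, pairWeight q t (j - (i + 1)) (l i - l j)) *
        macdonaldCoeff t (macdonaldPoint q t l)⁻¹ I * ∏ i, stripScale t I i ^ (i.rev : ℕ) =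
      (∏ i : Fin N, ∏ j ∈ Finset.Ioi i, pairWeight q t (j - (i + 1)) (m i - m j)) *
        macdonaldCoeff t (macdonaldPoint q t m) I * ∏ i, stripScale t I i ^ (i : ℕ) := by
  rw [← prod_prod_Ioi_fst, ← prod_prod_Ioi_snd]
  simp only [macdonaldCoeff_eq_prod, ← Finset.prod_mul_distrib]
  refine Finset.prod_congr rfl fun i _ => Finset.prod_congr rfl fun j hj => ?_
  have hij : i < j := Finset.mem_Ioi.1 hj
  have hlij := hl hij.le
  have hmij := hm hij.le
  rw [div_sub_eq_of_eq_mul (macdonaldPoint_ne_zero hq ht m j) (macdonaldPoint_eq_mul hmij hij),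
    Pi.inv_apply, Pi.inv_apply, inv_div_sub_eq_of_eq_mul (macdonaldPoint_ne_zero hq ht l i)
      (macdonaldPoint_eq_mul hlij hij)]
  subst hlm
  by_cases hi : i ∈ I <;> by_cases hj : j ∈ I <;> simp only [stripScale, hi, hj,
    not_false_eq_true, Finset.piecewise_eq_of_mem, Finset.piecewise_eq_of_notMem, Pi.add_apply,
    Pi.one_apply, one_mul, mul_one, Nat.add_sub_add_right] at hlij hmij ⊢
  · rw [show m i + 1 - m j = m i - m j + 1 by omega]
    exact pairWeight_succ_mul ht h _ _
  · rw [show m i - m j = m i - (m j + 1) + 1 by omega]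
    exact (pairWeight_succ_mul ht h _ _).symm

lemma prod_rowWeight_mul_prod (ht : t ≠ 0) (h : HookFactorsInvertible q t)
    (hlm : l = I.piecewise (m + 1) m) :
    (∏ i, rowWeight q t i.rev (l i)) *
        (∏ i ∈ I, (macdonaldPoint q t l i - 1) / t ^ (N - 1)) *
        ∏ i, stripScale t I i ^ (i : ℕ) =
      (∏ i, rowWeight q t i.rev (m i)) * (-1) ^ I.card *
        ∏ i, stripScale t I i ^ (i.rev : ℕ) := by
  rw [← Finset.prod_const, ← Finset.univ_inter I, ← Finset.prod_ite_mem, ← Finset.prod_ite_mem,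
    Finset.univ_inter]
  simp only [← Finset.prod_mul_distrib]
  refine Finset.prod_congr rfl fun i _ => ?_
  subst hlm
  by_cases hi : i ∈ I
  · simpa [stripScale, hi, macdonaldPoint] using rowWeight_succ_mul ht h i (m i)
  · simp [stripScale, hi]

lemma seqWeight_mul_shrinkCoeff (hq : q ≠ 0) (ht : t ≠ 0) (h : HookFactorsInvertible q t)
    (hl : Antitone l) (hm : Antitone m) (hlm : l = I.piecewise (m + 1) m) :
    seqWeight q t l * shrinkCoeff q t l I = seqWeight q t m * growCoeff q t m I := by
  have hscale (i : Fin N) : stripScale t I i ≠ 0 := by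
    by_cases hi : i ∈ I <;> simp [stripScale, hi, ht]
  have hprod : (∏ i, stripScale t I i ^ (i.rev : ℕ)) * ∏ i, stripScale t I i ^ (i : ℕ) ≠ 0 :=
    mul_ne_zero (Finset.prod_ne_zero_iff.2 fun i _ => pow_ne_zero _ (hscale i))
      (Finset.prod_ne_zero_iff.2 fun i _ => pow_ne_zero _ (hscale i))
  refine mul_right_cancel₀ hprod ?_
  simp only [seqWeight, shrinkCoeff, growCoeff, Finset.prod_mul_distrib]
  linear_combination congrArg₂ (· * ·) (prod_pairWeight_mul_macdonaldCoeff hq ht h hl hm hlm)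
    (prod_rowWeight_mul_prod ht h hlm)

end DetailedBalance

section FunctionalEquation

variable {K : Type*} [Field K] {N : ℕ} {q t : K} {m l : Fin N → ℕ} {I : Finset (Fin N)}

lemma macdonaldPoint_eq_of_covBy {i j : Fin N} (hij : i ⋖ j) (hl : l i = l j) :
    macdonaldPoint q t l i = t * macdonaldPoint q t l j := by
  have hij := Nat.covBy_iff_add_one_eq.1 (Fin.covBy_iff.1 hij)
  have hrev : (i.rev : ℕ) = j.rev + 1 := by simp only [Fin.val_rev]; omega
  rw [macdonaldPoint, macdonaldPoint, hl, hrev]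
  ring

lemma injective_of_macdonaldCoeff_ne_zero {x : Fin N → K} (h : macdonaldCoeff t x I ≠ 0) :
    (I.piecewise (t • x) x).Injective :=
  Matrix.det_vandermonde_ne_zero_iff.1 (div_ne_zero_iff.1 h).1

lemma antitone_of_growCoeff_ne_zero (hm : Antitone m) (h : growCoeff q t m I ≠ 0) :
    Antitone (I.piecewise (m + 1) m) := by
  have hinj := injective_of_macdonaldCoeff_ne_zero (right_ne_zero_of_mul h)
  refine (antitone_iff_forall_covBy _).2 fun i j hij => ?_
  have hle := hm hij.le
  have closed (heq : m i = m j) (hj : j ∈ I) : i ∈ I := by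
    by_contra hi
    exact hij.ne (hinj (by simp [hi, hj, macdonaldPoint_eq_of_covBy hij heq]))
  by_cases hi : i ∈ I <;> by_cases hj : j ∈ I <;> simp [hi, hj] <;> grind

lemma mem_of_covBy_of_shrinkCoeff_ne_zero (ht : t ≠ 0) (h : shrinkCoeff q t l I ≠ 0)
    {i j : Fin N} (hij : i ⋖ j) (heq : l i = l j) (hi : i ∈ I) : j ∈ I := by
  have hinj := injective_of_macdonaldCoeff_ne_zero (right_ne_zero_of_mul h)
  by_contra hj
  refine hij.ne (hinj ?_)
  simp only [hi, hj, not_false_eq_true, Finset.piecewise_eq_of_mem,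
    Finset.piecewise_eq_of_notMem, Pi.smul_apply, Pi.inv_apply, smul_eq_mul,
    macdonaldPoint_eq_of_covBy hij heq, mul_inv, mul_inv_cancel_left₀ ht]

lemma pos_of_shrinkCoeff_ne_zero (ht : t ≠ 0) (hl : Antitone l) (h : shrinkCoeff q t l I ≠ 0)
    {i : Fin N} (hi : i ∈ I) : 0 < l i := by
  by_contra! hzero
  let last := I.max' ⟨i, hi⟩
  have last_mem : last ∈ I := I.max'_mem _
  have last_zero : l last = 0 := Nat.le_zero.1 ((hl (I.le_max' i hi)).trans hzero)
  by_cases hN : (last : ℕ) + 1 < N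
  · have hcov : last ⋖ ⟨last + 1, hN⟩ := by simp [Fin.covBy_iff]
    have next_zero : l ⟨last + 1, hN⟩ = 0 := Nat.le_zero.1 (last_zero ▸ hl hcov.le)
    have next_mem := mem_of_covBy_of_shrinkCoeff_ne_zero ht h hcov (last_zero.trans next_zero.symm)
      last_mem
    exact hcov.lt.not_ge (I.le_max' _ next_mem)
  · have point_eq_one : macdonaldPoint q t l last = 1 := by
      have hrev : (last.rev : ℕ) = 0 := by simp only [Fin.val_rev]; omega
      rw [macdonaldPoint, hrev, last_zero, pow_zero, pow_zero, mul_one]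
    exact left_ne_zero_of_mul h (Finset.prod_eq_zero last_mem (by simp [point_eq_one]))

lemma exists_antitone_of_shrinkCoeff_ne_zero (ht : t ≠ 0) (hl : Antitone l)
    (h : shrinkCoeff q t l I ≠ 0) : ∃ m, Antitone m ∧ l = I.piecewise (m + 1) m := by
  refine ⟨I.piecewise (l - 1) l, (antitone_iff_forall_covBy _).2 fun i j hij => ?_, ?_⟩
  · have hle := hl hij.le
    have hmem := mem_of_covBy_of_shrinkCoeff_ne_zero ht h hij
    by_cases hi : i ∈ I <;> by_cases hj : j ∈ I <;> simp [hi, hj] <;> grind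
  · ext i
    by_cases hi : i ∈ I
    · have := pos_of_shrinkCoeff_ne_zero ht hl h hi
      simp only [hi, Finset.piecewise_eq_of_mem, Pi.add_apply, Pi.sub_apply, Pi.one_apply]
      omega
    · simp [hi]

/-- The weakly decreasing sequences of length `N` with sum `s`, i.e. the partitions of `s` with at
most `N` parts. -/
def antitoneSeqs (N s : ℕ) : Finset (Fin N → ℕ) :=
  {l ∈ Finset.piAntidiag Finset.univ s | Antitone l}

lemma mem_antitoneSeqs {s : ℕ} : l ∈ antitoneSeqs N s ↔ ∑ i, l i = s ∧ Antitone l := by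
  simp [antitoneSeqs]

lemma sum_piecewise_add_one : ∑ i, I.piecewise (m + 1) m i = I.card + ∑ i, m i := by
  have split (i : Fin N) : I.piecewise (m + 1) m i = (if i ∈ I then 1 else 0) + m i := by
    by_cases hi : i ∈ I <;> simp [hi, add_comm]
  simp [split, Finset.sum_add_distrib]

lemma piecewise_add_one_injective :
    Function.Injective fun m : Fin N → ℕ => I.piecewise (m + 1) m := by
  intro m m' heq
  ext i
  have heq_i := congrFun heq i
  by_cases hi : i ∈ I <;> simpa [hi] using heq_i

lemma sum_seqWeight_mul_shrinkCoeff (hq : q ≠ 0) (ht : t ≠ 0) (h : HookFactorsInvertible q t)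
    (I : Finset (Fin N)) (s : ℕ) :
    ∑ l ∈ antitoneSeqs N s, seqWeight q t l * shrinkCoeff q t l I =
      if I.card ≤ s then
        ∑ m ∈ antitoneSeqs N (s - I.card), seqWeight q t m * growCoeff q t m I
      else 0 := by
  have shrink_exists {l : Fin N → ℕ} (hl : l ∈ antitoneSeqs N s)
      (hne : seqWeight q t l * shrinkCoeff q t l I ≠ 0) :
      ∃ m, Antitone m ∧ l = I.piecewise (m + 1) m ∧ I.card + ∑ i, m i = s := by
    obtain ⟨hsum, hanti⟩ := mem_antitoneSeqs.1 hl
    obtain ⟨m, hm, rfl⟩ :=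
      exists_antitone_of_shrinkCoeff_ne_zero ht hanti (right_ne_zero_of_mul hne)
    exact ⟨m, hm, rfl, sum_piecewise_add_one.symm.trans hsum⟩
  have grow_mem (hcard : I.card ≤ s) {m : Fin N → ℕ} (hm : m ∈ antitoneSeqs N (s - I.card))
      (hne : seqWeight q t m * growCoeff q t m I ≠ 0) :
      I.piecewise (m + 1) m ∈ antitoneSeqs N s := by
    obtain ⟨hsum, hm⟩ := mem_antitoneSeqs.1 hm
    refine mem_antitoneSeqs.2
      ⟨?_, antitone_of_growCoeff_ne_zero hm (right_ne_zero_of_mul hne)⟩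
    rw [sum_piecewise_add_one, hsum, Nat.add_sub_cancel' hcard]
  split_ifs with hcard
  · refine (Finset.sum_bij_ne_zero (fun m _ _ => I.piecewise (m + 1) m)
      (fun m hm hne => grow_mem hcard hm hne)
      (fun m _ _ m' _ _ heq => piecewise_add_one_injective heq) ?_ ?_).symm
    · intro l hl hne
      obtain ⟨m, hm, rfl, hsum⟩ := shrink_exists hl hne
      refine ⟨m, mem_antitoneSeqs.2 ⟨by omega, hm⟩, ?_, rfl⟩
      rwa [← seqWeight_mul_shrinkCoeff hq ht h (mem_antitoneSeqs.1 hl).2 hm rfl]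
    · intro m hm hne
      exact (seqWeight_mul_shrinkCoeff hq ht h (mem_antitoneSeqs.1 (grow_mem hcard hm hne)).2
        (mem_antitoneSeqs.1 hm).2 rfl).symm
  · refine Finset.sum_eq_zero fun l hl => by_contra fun hne => ?_
    obtain ⟨m, -, -, hsum⟩ := shrink_exists hl hne
    omega

open PowerSeries in
/-- Summed against the weights, shrinking multiplies by `q ^ s` and growing by the product; the two
sums agree by detailed balance. -/
lemma rescale_mk_sum_seqWeight (hq : q ≠ 0) (ht : t ≠ 0) (h : HookFactorsInvertible q t) :
    rescale q (mk fun s => ∑ l ∈ antitoneSeqs N s, seqWeight q t l) =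
      (∏ j ∈ Finset.range N, (1 - C (t ^ j) * X)) *
        mk fun s => ∑ l ∈ antitoneSeqs N s, seqWeight q t l := by
  calc _ = ∑ I : Finset (Fin N),
        mk fun s => ∑ l ∈ antitoneSeqs N s, seqWeight q t l * shrinkCoeff q t l I := by
        ext s
        simp only [coeff_rescale, coeff_mk, map_sum]
        rw [Finset.sum_comm, Finset.mul_sum]
        refine Finset.sum_congr rfl fun l hl => ?_
        obtain ⟨hsum, hl⟩ := mem_antitoneSeqs.1 hl
        rw [← Finset.mul_sum, sum_shrinkCoeff hq ht h hl, hsum, mul_comm]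
    _ = ∑ I : Finset (Fin N),
        X ^ I.card * mk fun s => ∑ m ∈ antitoneSeqs N s, seqWeight q t m * growCoeff q t m I := by
        refine Finset.sum_congr rfl fun I _ => ?_
        ext s
        rw [coeff_X_pow_mul', coeff_mk, coeff_mk, sum_seqWeight_mul_shrinkCoeff hq ht h]
    _ = _ := by
        ext s
        simp only [map_sum, coeff_mul, coeff_mk]
        rw [Finset.sum_comm]
        refine Finset.sum_congr rfl fun ab _ => ?_
        simp only [Finset.mul_sum]
        rw [Finset.sum_comm]
        refine Finset.sum_congr rfl fun m hm => ?_
        rw [← sum_C_growCoeff_mul_X_pow hq ht h (mem_antitoneSeqs.1 hm).2, map_sum,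
          Finset.sum_mul]
        simp only [coeff_C_mul]
        exact Finset.sum_congr rfl fun I _ => by ring

end FunctionalEquation

section PartitionDiagrams

lemma mem_iff_lt_card_of_isLowerSet {S : Finset ℕ} (hS : IsLowerSet (S : Set ℕ)) (n : ℕ) :
    n ∈ S ↔ n < S.card := by
  obtain huniv | ⟨a, ha⟩ := hS.eq_univ_or_Iio
  · exact absurd (huniv ▸ S.finite_toSet) Set.infinite_univ.not_finite
  · obtain rfl : S = Finset.range a := by ext; simp [← Finset.mem_coe, ha]
    simp

variable {s N : ℕ} (p : Nat.Partition s)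

lemma colLen_antitone : Antitone (colLen p) := fun _ _ h =>
  Multiset.card_le_card (Multiset.monotone_filter_right _ fun _ hx => h.trans_lt hx)

lemma colLen_eq_zero {c : ℕ} (hc : s ≤ c) : colLen p c = 0 := by
  rw [colLen, Multiset.card_eq_zero, Multiset.filter_eq_nil]
  exact fun a ha => ((p.le_of_mem_parts ha).trans hc).not_gt

lemma colLen_le (c : ℕ) : colLen p c ≤ s := by
  calc colLen p c ≤ Multiset.card p.parts := Multiset.card_le_card (Multiset.filter_le _ _)
    _ = (p.parts.map fun _ => 1).sum := by simp
    _ ≤ (p.parts.map id).sum := Multiset.sum_map_le_sum_map _ _ fun _ hx => p.parts_pos hx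
    _ = s := by rw [Multiset.map_id, p.parts_sum]

lemma lt_rowLen_iff (i c : ℕ) : c < rowLen p i ↔ i < colLen p c := by
  have hS : IsLowerSet (({j ∈ Finset.range s | i < colLen p j} : Finset ℕ) : Set ℕ) := by
    intro a b hba ha
    simp only [Finset.mem_coe, Finset.mem_filter, Finset.mem_range] at ha ⊢
    exact ⟨hba.trans_lt ha.1, ha.2.trans_le (colLen_antitone p hba)⟩
  rw [rowLen, ← mem_iff_lt_card_of_isLowerSet hS, Finset.mem_filter, Finset.mem_range,
    and_iff_right_iff_imp]
  intro hi
  by_contra! hc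
  simp [colLen_eq_zero p hc] at hi

lemma rowLen_antitone : Antitone (rowLen p) := fun i j hij =>
  le_of_forall_lt fun c hc => (lt_rowLen_iff p i c).2 (hij.trans_lt ((lt_rowLen_iff p j c).1 hc))

lemma rowLen_le (i : ℕ) : rowLen p i ≤ s :=
  (Finset.card_filter_le _ _).trans (Finset.card_range s).le

lemma mem_boxes (b : ℕ × ℕ) : b ∈ boxes p ↔ b.2 < rowLen p b.1 := by
  simp only [boxes, Finset.mem_filter, Finset.mem_product, Finset.mem_range,
    and_iff_right_iff_imp]
  exact fun hb => ⟨((lt_rowLen_iff p _ _).1 hb).trans_le (colLen_le p _),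
    hb.trans_le (rowLen_le p _)⟩

variable {p}

lemma lt_of_lt_rowLen (hN : colLen p 0 ≤ N) {i c : ℕ} (hc : c < rowLen p i) : i < N :=
  ((lt_rowLen_iff p i c).1 hc).trans_le ((colLen_antitone p c.zero_le).trans hN)

@[to_additive]
lemma prod_boxes {M : Type*} [CommMonoid M] (hN : colLen p 0 ≤ N) (f : ℕ × ℕ → M) :
    ∏ b ∈ boxes p, f b = ∏ i : Fin N, ∏ c ∈ Finset.range (rowLen p i), f (i, c) := by
  rw [Fin.prod_univ_eq_prod_range (fun i => ∏ c ∈ Finset.range (rowLen p i), f (i, c))]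
  refine Finset.prod_finset_product _ _ _ fun b => ?_
  rw [mem_boxes, Finset.mem_range, Finset.mem_range, iff_and_self]
  exact lt_of_lt_rowLen hN

lemma card_rowLen_gt (hN : colLen p 0 ≤ N) (c : ℕ) :
    Finset.card {i : Fin N | c < rowLen p i} = colLen p c := by
  have hc : colLen p c ≤ N := (colLen_antitone p c.zero_le).trans hN
  simp only [lt_rowLen_iff, Fin.card_filter_val_lt, min_eq_right hc]

lemma filter_pos_eq_of_card_filter_lt_eq {S S' : Multiset ℕ}
    (h : ∀ c, (S.filter (c < ·)).card = (S'.filter (c < ·)).card) :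
    S.filter (· ≠ 0) = S'.filter (· ≠ 0) := by
  have count_succ (S : Multiset ℕ) (c : ℕ) :
      S.count (c + 1) + (S.filter (c + 1 < ·)).card = (S.filter (c < ·)).card := by
    rw [Multiset.count_eq_card_filter_eq, ← Multiset.card_add, Multiset.filter_add_filter,
      Multiset.filter_eq_nil.2 (by omega : ∀ a ∈ S, ¬(c + 1 = a ∧ c + 1 < a)), add_zero]
    congr 1
    exact Multiset.filter_congr fun a _ => by omega
  ext a
  obtain _ | c := a
  · simp
  · have h₁ := count_succ S c
    have h₂ := count_succ S' c
    rw [h c, h (c + 1)] at h₁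
    simp only [Multiset.count_filter, ne_eq, c.succ_ne_zero, not_false_eq_true, if_true]
    omega

lemma filter_map_rowLen (hN : colLen p 0 ≤ N) :
    (Finset.univ.val.map fun i : Fin N => rowLen p i).filter (· ≠ 0) = p.parts := by
  rw [← Multiset.filter_eq_self.2 fun a ha => (p.parts_pos ha).ne']
  refine filter_pos_eq_of_card_filter_lt_eq fun c => ?_
  rw [Multiset.filter_map, Multiset.card_map]
  exact card_rowLen_gt hN c

lemma sum_rowLen (hN : colLen p 0 ≤ N) : ∑ i : Fin N, rowLen p i = s := by
  let rows : Multiset ℕ := Finset.univ.val.map fun i : Fin N => rowLen p i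
  calc _ = (Nat.Partition.ofSums _ rows rfl).parts.sum := (Nat.Partition.parts_sum _).symm
    _ = p.parts.sum := congrArg Multiset.sum (filter_map_rowLen hN)
    _ = s := p.parts_sum

lemma rowLen_eq_of_parts_eq {l : Fin N → ℕ} (hl : Antitone l)
    (hp : p.parts = (Finset.univ.val.map l).filter (· ≠ 0)) :
    colLen p 0 ≤ N ∧ ∀ i : Fin N, rowLen p i = l i := by
  have colLen_eq (c : ℕ) : colLen p c = Finset.card {i : Fin N | c < l i} := by
    rw [colLen, hp, Multiset.filter_filter, Multiset.filter_map, Multiset.card_map]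
    exact congrArg Multiset.card (Multiset.filter_congr fun i _ =>
      ⟨fun ⟨hc, _⟩ => hc, fun hc => ⟨hc, Nat.ne_zero_of_lt hc⟩⟩)
  refine ⟨?_, fun i => eq_of_forall_lt_iff fun c => ?_⟩
  · exact (colLen_eq 0).trans_le ((Finset.card_le_univ _).trans (Fintype.card_fin N).le)
  · have hS : IsLowerSet ((({i : Fin N | c < l i} : Finset (Fin N)).map Fin.valEmbedding :
        Finset ℕ) : Set ℕ) := by
      intro a b hba ha
      simp only [Finset.mem_coe, Finset.mem_map, Finset.mem_filter, Finset.mem_univ, true_and,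
        Fin.valEmbedding_apply] at ha ⊢
      obtain ⟨j, hj, rfl⟩ := ha
      exact ⟨⟨b, hba.trans_lt j.2⟩, hj.trans_le (hl hba), rfl⟩
    rw [lt_rowLen_iff, colLen_eq, ← Finset.card_map Fin.valEmbedding,
      ← mem_iff_lt_card_of_isLowerSet hS]
    simp [Fin.val_inj]

lemma sum_antitoneSeqs {M : Type*} [AddCommMonoid M] (f : (Fin N → ℕ) → M) :
    ∑ l ∈ antitoneSeqs N s, f l =
      ∑ p : Nat.Partition s with colLen p 0 ≤ N, f fun i => rowLen p i := by
  symm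
  refine Finset.sum_bij (fun p _ i => rowLen p i) ?_ ?_ ?_ fun _ _ => rfl
  · intro p hp
    exact mem_antitoneSeqs.2 ⟨sum_rowLen (by simpa using hp),
      (rowLen_antitone p).comp_monotone Fin.val_strictMono.monotone⟩
  · intro p hp p' hp' heq
    ext1
    rw [← filter_map_rowLen (by simpa using hp : colLen p 0 ≤ N), heq,
      filter_map_rowLen (by simpa using hp')]
  · intro l hl
    obtain ⟨hsum, hanti⟩ := mem_antitoneSeqs.1 hl
    let p := Nat.Partition.ofSums s (Finset.univ.val.map l) hsum
    obtain ⟨hN, hrow⟩ := rowLen_eq_of_parts_eq (p := p) hanti rfl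
    exact ⟨p, by simpa using hN, funext hrow⟩

lemma prod_Ioi_eq_prod_range {M : Type*} [CommMonoid M] (i : Fin N) (f : ℕ → M) :
    ∏ j ∈ Finset.Ioi i, f j = ∏ k ∈ Finset.range i.rev, f (i + 1 + k) := by
  calc _ = ∏ j ∈ (Finset.Ioi i).map Fin.valEmbedding, f j := by rw [Finset.prod_map]; rfl
    _ = ∏ j ∈ Finset.Ico (i + 1 : ℕ) N, f j := by
        rw [Fin.map_valEmbedding_Ioi]
        congr 1
    _ = _ := by rw [Finset.prod_Ico_eq_prod_range, Fin.val_rev]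

lemma legLength_le_rev (hN : colLen p 0 ≤ N) (i : Fin N) (c : ℕ) :
    legLength p (i, c) ≤ i.rev := by
  have := (colLen_antitone p c.zero_le).trans hN
  simp only [legLength, Fin.val_rev]
  omega

lemma legLength_reflect_le_iff {i a : ℕ} (ha : a < rowLen p i) (k : ℕ) :
    legLength p (i, rowLen p i - 1 - a) ≤ k ↔ a < rowLen p i - rowLen p (i + 1 + k) := by
  have := lt_rowLen_iff p (i + 1 + k) (rowLen p i - 1 - a)
  simp only [legLength]
  omega

lemma eq_mul_prod_Ico_div {G : Type*} [CommGroupWithZero G] {f : ℕ → G} (hf : ∀ n, f n ≠ 0)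
    {m n : ℕ} (hmn : m ≤ n) : f m = f n * ∏ k ∈ Finset.Ico m n, f k / f (k + 1) := by
  induction n, hmn using Nat.le_induction with
  | base => simp
  | succ n hmn ih =>
    rw [Finset.prod_Ico_succ_top hmn, mul_left_comm, mul_div_cancel₀ _ (hf _), mul_comm]
    exact ih

lemma prod_row_arm_leg {G : Type*} [CommGroupWithZero G] (H : ℕ → ℕ → G)
    (hH : ∀ a d, H a d ≠ 0) (hN : colLen p 0 ≤ N) (i : Fin N) :
    ∏ c ∈ Finset.range (rowLen p i), H (armLength p (i, c)) (legLength p (i, c)) =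
      (∏ a ∈ Finset.range (rowLen p i), H a i.rev) * ∏ j ∈ Finset.Ioi i,
        ∏ a ∈ Finset.range (rowLen p i - rowLen p j),
          H a (j - (i + 1)) / H a (j - (i + 1) + 1) := by
  let leg (a : ℕ) := legLength p (i, rowLen p i - 1 - a)
  calc _ = ∏ a ∈ Finset.range (rowLen p i), H a (leg a) := by
        rw [← Finset.prod_range_reflect]
        refine Finset.prod_congr rfl fun a ha => ?_
        rw [Finset.mem_range] at ha
        congr 1
        simp only [armLength]
        omega
    _ = (∏ a ∈ Finset.range (rowLen p i), H a i.rev) * ∏ a ∈ Finset.range (rowLen p i),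
          ∏ k ∈ Finset.Ico (leg a) i.rev, H a k / H a (k + 1) := by
        rw [← Finset.prod_mul_distrib]
        exact Finset.prod_congr rfl fun a _ => eq_mul_prod_Ico_div (hH a) (legLength_le_rev hN i _)
    _ = _ := by
        rw [prod_Ioi_eq_prod_range i fun j => ∏ a ∈ Finset.range (rowLen p i - rowLen p j),
          H a (j - (i + 1)) / H a (j - (i + 1) + 1)]
        simp only [Nat.add_sub_cancel_left]
        congr 1
        refine Finset.prod_comm' fun a k => ?_
        simp only [Finset.mem_range, Finset.mem_Ico]
        constructor
        · exact fun ⟨ha, hk, hkN⟩ => ⟨(legLength_reflect_le_iff ha k).1 hk, hkN⟩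
        · intro ⟨ha, hkN⟩
          have ha' := ha.trans_le (Nat.sub_le _ _)
          exact ⟨ha', (legLength_reflect_le_iff ha' k).2 ha, hkN⟩

end PartitionDiagrams

section HookSeries

lemma map_ringInverse {M M' F : Type*} [MonoidWithZero M] [MonoidWithZero M'] [FunLike F M M']
    [MonoidHomClass F M M'] (φ : F) {a : M} (ha : IsUnit a) :
    φ (Ring.inverse a) = Ring.inverse (φ a) := by
  obtain ⟨a, rfl⟩ := ha
  calc φ (Ring.inverse a) = ↑(Units.map (φ : M →* M') a)⁻¹ := by rw [Ring.inverse_unit]; rfl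
    _ = Ring.inverse (φ a) := (Ring.inverse_unit (Units.map (φ : M →* M') a)).symm

section CommRing

variable {R S : Type*} [CommRing R] [CommRing S] {s : ℕ} (q t : R) (N : ℕ)

/-- The product of the box weights of `p`, truncated to partitions with at most `N` rows: the
extra factor of the box `(N, 0)` is zero. -/
noncomputable def hookWeight (p : Nat.Partition s) : R :=
  ∏ b ∈ boxes p, boxWeight q t (armLength p b) (legLength p b) * (1 - q ^ b.2 * t ^ (N - b.1))

/-- The generating function of the truncated hook weights by size. -/
noncomputable def hookSeries : PowerSeries R :=
  .mk fun s => ∑ p : Nat.Partition s, hookWeight q t N p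

variable {q t}

lemma HookFactorsInvertible.map (φ : R →+* S) (h : HookFactorsInvertible q t) :
    HookFactorsInvertible (φ q) (φ t) := fun a b hab => by
  simpa using (h a b hab).map φ

lemma map_boxWeight (φ : R →+* S) (h : HookFactorsInvertible q t) (a l : ℕ) :
    φ (boxWeight q t a l) = boxWeight (φ q) (φ t) a l := by
  simp only [boxWeight, map_mul, map_pow, map_ringInverse φ (h (a + 1) l (by omega)),
    map_ringInverse φ (h a (l + 1) (by omega)), map_sub, map_one]

lemma map_hookWeight (φ : R →+* S) (h : HookFactorsInvertible q t) (p : Nat.Partition s) :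
    φ (hookWeight q t N p) = hookWeight (φ q) (φ t) N p := by
  simp only [hookWeight, map_prod, map_mul, map_boxWeight φ h, map_sub, map_one, map_pow]

lemma map_hookSeries (φ : R →+* S) (h : HookFactorsInvertible q t) :
    PowerSeries.map φ (hookSeries q t N) = hookSeries (φ q) (φ t) N := by
  ext s
  simp only [PowerSeries.coeff_map, hookSeries, PowerSeries.coeff_mk, map_sum,
    map_hookWeight N φ h]

lemma constantCoeff_hookSeries : PowerSeries.constantCoeff (hookSeries q t N) = 1 := by
  have boxes_eq_empty (p : Nat.Partition 0) : boxes p = ∅ := by simp [boxes]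
  rw [← PowerSeries.coeff_zero_eq_constantCoeff_apply, hookSeries, PowerSeries.coeff_mk,
    Fintype.sum_unique, hookWeight, boxes_eq_empty, Finset.prod_empty]

lemma hookWeight_eq_zero {p : Nat.Partition s} (hN : N < colLen p 0) : hookWeight q t N p = 0 :=
  Finset.prod_eq_zero ((mem_boxes p (N, 0)).2 ((lt_rowLen_iff p N 0).2 hN)) (by simp)

end CommRing

variable {s N : ℕ}

lemma seqWeight_rowLen {K : Type*} [Field K] {q t : K} (ht : t ≠ 0)
    (h : HookFactorsInvertible q t) {p : Nat.Partition s} (hN : colLen p 0 ≤ N) :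
    seqWeight q t (fun i : Fin N => rowLen p i) = hookWeight q t N p := by
  have rowWeight_eq (e r : ℕ) : rowWeight q t e r =
      ∏ a ∈ Finset.range r, boxWeight q t a e * (1 - q ^ a * t ^ (e + 1)) := by
    refine Finset.prod_congr rfl fun a _ => ?_
    rw [boxWeight, Ring.inverse_eq_inv, Ring.inverse_eq_inv,
      inv_mul_cancel_right₀ (h.ne_zero (by omega)), div_eq_mul_inv]
  rw [hookWeight, prod_boxes hN]
  refine Finset.prod_congr rfl fun i _ => ?_
  rw [Finset.prod_mul_distrib, prod_row_arm_leg (boxWeight q t) (boxWeight_ne_zero ht h) hN,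
    rowWeight_eq, Finset.prod_mul_distrib, mul_right_comm]
  congr! 5
  rw [Fin.val_rev]
  omega

open PowerSeries in
lemma rescale_hookSeries {R : Type*} [CommRing R] [IsDomain R] {q t : R} (hq : q ≠ 0) (ht : t ≠ 0)
    (h : HookFactorsInvertible q t) :
    rescale q (hookSeries q t N) =
      (∏ j ∈ Finset.range N, (1 - C (t ^ j) * X)) * hookSeries q t N := by
  let φ := algebraMap R (FractionRing R)
  have hφ : Function.Injective φ := IsFractionRing.injective R _
  have hq' : φ q ≠ 0 := (map_ne_zero_iff φ hφ).2 hq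
  have ht' : φ t ≠ 0 := (map_ne_zero_iff φ hφ).2 ht
  have hookSeries_eq : hookSeries (φ q) (φ t) N =
      mk fun s => ∑ l ∈ antitoneSeqs N s, seqWeight (φ q) (φ t) l := by
    ext s
    rw [hookSeries, coeff_mk, coeff_mk, sum_antitoneSeqs, Finset.sum_filter]
    refine Finset.sum_congr rfl fun p _ => ?_
    split_ifs with hN
    · exact (seqWeight_rowLen ht' (h.map φ) hN).symm
    · exact hookWeight_eq_zero N (not_le.1 hN)
  refine map_injective φ hφ ?_
  simp only [map_mul, map_prod, map_sub, map_one, map_C, map_X, map_pow, map_hookSeries N φ h,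
    ← rescale_map]
  rw [hookSeries_eq, rescale_mk_sum_seqWeight hq' ht' (h.map φ)]
  simp

open PowerSeries in
lemma rescale_pow_eq_prod_mul {R : Type*} [CommRing R] {q : R} {F P : R⟦X⟧}
    (h : rescale q F = P * F) (S : ℕ) :
    rescale (q ^ S) F = (∏ i ∈ Finset.range S, rescale (q ^ i) P) * F := by
  induction S with
  | zero => simp
  | succ S ih =>
    calc rescale (q ^ (S + 1)) F = rescale (q ^ S) (rescale q F) := by
          rw [rescale_rescale, pow_succ']
      _ = _ := by rw [h, map_mul, ih, Finset.prod_range_succ, mul_left_comm, mul_assoc]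

open PowerSeries in
lemma rescale_one_sub_C_mul_X {R : Type*} [CommRing R] (a c : R) :
    rescale a (1 - C c * X) = 1 - C (a * c) * X := by
  have rescale_C : rescale a (C c) = C c := by ext n; obtain _ | n := n <;> simp
  rw [map_sub, map_one, map_mul, rescale_C, rescale_X, ← mul_assoc, ← map_mul, mul_comm c]

open PowerSeries in
lemma prod_mul_hookSeries_map {R A : Type*} [CommRing R] [IsDomain R] [CommRing A] {q t : R}
    (hq : q ≠ 0) (ht : t ≠ 0) (h : HookFactorsInvertible q t) (φ : R →+* A) {S : ℕ}
    (hS : φ q ^ S = 0) :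
    (∏ i ∈ Finset.range S, ∏ j ∈ Finset.range N, (1 - C (φ q ^ i * φ t ^ j) * X)) *
      hookSeries (φ q) (φ t) N = 1 := by
  have functional_equation : rescale (φ q) (hookSeries (φ q) (φ t) N) =
      (∏ j ∈ Finset.range N, (1 - C (φ t ^ j) * X)) * hookSeries (φ q) (φ t) N := by
    rw [← map_hookSeries N φ h, rescale_map, rescale_hookSeries hq ht h]
    simp
  have iterated := rescale_pow_eq_prod_mul functional_equation S
  rw [hS, rescale_zero_apply, constantCoeff_hookSeries, map_one] at iterated
  refine .trans ?_ iterated.symm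
  congr! 2 with i
  rw [map_prod]
  refine Finset.prod_congr rfl fun j _ => ?_
  rw [rescale_one_sub_C_mul_X]

open Polynomial in
lemma eval_mul_sum_coeff_mul_pow {R : Type*} [CommRing R] {P : R[X]} {G : PowerSeries R}
    (hPG : (P : PowerSeries R) * G = 1) {x : R} {M : ℕ} (hx : x ^ M = 0) :
    P.eval x * ∑ s ∈ Finset.range M, G.coeff s * x ^ s = 1 := by
  have X_pow_dvd : X ^ M ∣ P * G.trunc M - 1 := by
    rw [X_pow_dvd_iff]
    intro d hd
    rw [← coeff_coe, coe_sub, coe_mul, coe_one, ← hPG, ← mul_sub]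
    nth_rewrite 2 [G.eq_X_pow_mul_shift_add_trunc M]
    rw [sub_add_cancel_right, mul_neg, mul_left_comm, map_neg, PowerSeries.coeff_X_pow_mul',
      if_neg hd.not_ge, neg_zero]
  have eval_trunc : (G.trunc M).eval x = ∑ s ∈ Finset.range M, G.coeff s * x ^ s :=
    PowerSeries.eval₂_trunc_eq_sum_range ..
  have := eval_dvd (x := x) X_pow_dvd
  rw [eval_pow, eval_X, hx, zero_dvd_iff, eval_sub, eval_mul, eval_one, sub_eq_zero] at this
  rw [← eval_trunc, this]

lemma prod_mul_sum_hookWeight (N : ℕ) {R A : Type*} [CommRing R] [IsDomain R] [CommRing A] {q t : R}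
    (hq : q ≠ 0) (ht : t ≠ 0) (h : HookFactorsInvertible q t) (φ : R →+* A) {x : A} {S M : ℕ}
    (hS : φ q ^ S = 0) (hx : x ^ M = 0) :
    (∏ i ∈ Finset.range S, ∏ j ∈ Finset.range N, (1 - φ q ^ i * φ t ^ j * x)) *
      ∑ s ∈ Finset.range M, (∑ p : Nat.Partition s, hookWeight (φ q) (φ t) N p) * x ^ s = 1 := by
  let P : Polynomial A := ∏ i ∈ Finset.range S, ∏ j ∈ Finset.range N,
    (1 - .C (φ q ^ i * φ t ^ j) * .X)
  have P_mul : (P : PowerSeries A) * hookSeries (φ q) (φ t) N = 1 := by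
    rw [← prod_mul_hookSeries_map (N := N) hq ht h φ hS]
    simp only [P, ← Polynomial.coeToPowerSeries.ringHom_apply, map_prod, map_sub, map_one, map_mul]
    simp
  have eval_P : P.eval x =
      ∏ i ∈ Finset.range S, ∏ j ∈ Finset.range N, (1 - φ q ^ i * φ t ^ j * x) := by
    simp [P, Polynomial.eval_prod]
  rw [← eval_P, ← eval_mul_sum_coeff_mul_pow P_mul hx]
  simp only [hookSeries, PowerSeries.coeff_mk]

lemma hookWeight_eq_prod_boxWeight {R : Type*} [CommRing R] (q : R) {t : R} {L : ℕ}
    (ht : t ^ L = 0) (hN : L + s ≤ N) (p : Nat.Partition s) :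
    hookWeight q t N p = ∏ b ∈ boxes p, boxWeight q t (armLength p b) (legLength p b) := by
  refine Finset.prod_congr rfl fun b hb => ?_
  have b_row_lt : b.1 < s :=
    ((lt_rowLen_iff p _ _).1 ((mem_boxes p b).1 hb)).trans_le (colLen_le p _)
  rw [pow_eq_zero_of_le (by omega) ht, mul_zero, sub_zero, mul_one]

end HookSeries

section Truncation

open MvPowerSeries

variable {σ R : Type*} [CommRing R]

/-- The ideal of power series with no monomials of multidegree at most `d`. -/
noncomputable def truncIdeal (R : Type*) [CommRing R] (d : σ →₀ ℕ) : Ideal (MvPowerSeries σ R) :=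
  (LinearTopology.basis σ R (⊥, d)).asIdeal

lemma mem_truncIdeal {d : σ →₀ ℕ} {f : MvPowerSeries σ R} :
    f ∈ truncIdeal R d ↔ ∀ e ≤ d, coeff e f = 0 := by
  simp [truncIdeal, LinearTopology.mem_basis_iff]

lemma coeff_eq_of_mk_truncIdeal_eq {d : σ →₀ ℕ} {f g : MvPowerSeries σ R}
    (h : Ideal.Quotient.mk (truncIdeal R d) f = Ideal.Quotient.mk (truncIdeal R d) g) :
    coeff d f = coeff d g := by
  rw [← sub_eq_zero, ← map_sub]
  exact mem_truncIdeal.1 (Ideal.Quotient.eq.1 h) d le_rfl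

lemma mk_truncIdeal_X_pow {d : σ →₀ ℕ} {i : σ} {k : ℕ} (hk : d i < k) :
    Ideal.Quotient.mk (truncIdeal R d) (X i) ^ k = 0 := by
  classical
  rw [← map_pow, Ideal.Quotient.eq_zero_iff_mem, mem_truncIdeal]
  intro e he
  rw [coeff_X_pow, if_neg]
  rintro rfl
  exact hk.not_ge (by simpa using he i)

lemma hookFactorsInvertible_X (i j : σ) :
    HookFactorsInvertible (X i : MvPowerSeries σ R) (X j) := fun a b hab => by
  rw [isUnit_iff_constantCoeff]
  obtain rfl | ha := eq_or_ne a 0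
  · simp [show b ≠ 0 by omega]
  · simp [ha]

end Truncation

section Convergence

open MvPowerSeries
open scoped MvPowerSeries.WithPiTopology

variable {σ R ι : Type*} [CommRing R] [TopologicalSpace R]

lemma tendsto_of_eventually_coeff_eq {l : Filter ι} {F : ι → MvPowerSeries σ R}
    {a : MvPowerSeries σ R} (h : ∀ d, ∀ᶠ i in l, coeff d (F i) = coeff d a) :
    Filter.Tendsto F l (nhds a) :=
  (WithPiTopology.tendsto_iff_coeff_tendsto ..).2 fun d =>
    tendsto_const_nhds.congr' ((h d).mono fun _ hi => hi.symm)

variable {f : ι → MvPowerSeries σ R} {a : MvPowerSeries σ R} (B : (σ →₀ ℕ) → Finset ι)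

lemma hasSum_of_mk_truncIdeal_eq_zero
    (hB : ∀ d, ∀ i ∉ B d, Ideal.Quotient.mk (truncIdeal R d) (f i) = 0)
    (ha : ∀ d, coeff d a = coeff d (∑ i ∈ B d, f i)) : HasSum f a := by
  refine tendsto_of_eventually_coeff_eq fun d => ?_
  filter_upwards [Filter.eventually_ge_atTop (B d)] with s hs
  rw [ha]
  refine coeff_eq_of_mk_truncIdeal_eq ?_
  rw [map_sum, map_sum, Finset.sum_subset hs fun i _ => hB d i]

lemma hasProd_of_mk_truncIdeal_eq_one
    (hB : ∀ d, ∀ i ∉ B d, Ideal.Quotient.mk (truncIdeal R d) (f i) = 1)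
    (ha : ∀ d, coeff d a = coeff d (∏ i ∈ B d, f i)) : HasProd f a := by
  refine tendsto_of_eventually_coeff_eq fun d => ?_
  filter_upwards [Filter.eventually_ge_atTop (B d)] with s hs
  rw [ha]
  refine coeff_eq_of_mk_truncIdeal_eq ?_
  rw [map_prod, map_prod, Finset.prod_subset hs fun i _ => hB d i]

end Convergence

section BothSides

open MvPowerSeries

local notation "z" => (X 0 : MvPowerSeries (Fin 3) ℤ)
local notation "u" => (X 1 : MvPowerSeries (Fin 3) ℤ)
local notation "T" => (X 2 : MvPowerSeries (Fin 3) ℤ)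

lemma card_boxes {s : ℕ} (p : Nat.Partition s) : (boxes p).card = s := by
  rw [Finset.card_eq_sum_ones, sum_boxes le_rfl]
  simpa using sum_rowLen (p := p) le_rfl

lemma lhsTerm_mk {s : ℕ} (p : Nat.Partition s) :
    lhsTerm ⟨s, p⟩ =
      (∏ b ∈ boxes p, boxWeight z u (armLength p b) (legLength p b)) * (u * T) ^ s := by
  have prod_u : ∏ _b ∈ boxes p, u = u ^ s := by rw [Finset.prod_const, card_boxes]
  rw [lhsTerm, mul_pow, ← prod_u, ← mul_assoc, ← Finset.prod_mul_distrib, mul_comm]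
  congr 1
  refine Finset.prod_congr rfl fun b _ => ?_
  rw [boxWeight, pow_succ]
  ring

lemma isUnit_one_sub_mul (i j : ℕ) : IsUnit (1 - z ^ i * u ^ j * (u * T)) := by
  simp [isUnit_iff_constantCoeff]

lemma rhsFactor_mk (j i : ℕ) :
    rhsFactor (j, i) = Ring.inverse (1 - z ^ i * u ^ j * (u * T)) := by
  simp only [rhsFactor, pow_succ, mul_assoc]

/-- The partitions whose terms can contribute to coefficients of multidegree at most `d`. -/
def partitionsUpTo (d : Fin 3 →₀ ℕ) : Finset (Σ s, Nat.Partition s) :=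
  (Finset.range (d 1 + 1)).sigma fun _ => Finset.univ

/-- The indices of a finite set of factors whose product has the correct coefficients up to
multidegree `d`; there are `N = 2 * d 1 + 2` values of `r`, so that the row bound `N` is not felt
by partitions of size at most `d 1` modulo `u ^ (d 1 + 1)`. -/
def factorsUpTo (d : Fin 3 →₀ ℕ) : Finset (ℕ × ℕ) :=
  Finset.range (2 * d 1 + 2) ×ˢ Finset.range (d 0 + 1)

variable (d : Fin 3 →₀ ℕ)

lemma mk_u_mul_T_pow_eq_zero {s : ℕ} (hs : d 1 < s) :
    Ideal.Quotient.mk (truncIdeal ℤ d) (u * T) ^ s = 0 := by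
  rw [map_mul, mul_pow, mk_truncIdeal_X_pow hs, zero_mul]

lemma mk_lhsTerm_eq_zero {p : Σ s, Nat.Partition s} (hp : p ∉ partitionsUpTo d) :
    Ideal.Quotient.mk (truncIdeal ℤ d) (lhsTerm p) = 0 := by
  obtain ⟨s, p⟩ := p
  have hs : d 1 < s := by simpa [partitionsUpTo] using hp
  rw [lhsTerm_mk, map_mul, map_pow, mk_u_mul_T_pow_eq_zero d hs, mul_zero]

lemma mk_rhsFactor_eq_one {rs : ℕ × ℕ} (hrs : rs ∉ factorsUpTo d) :
    Ideal.Quotient.mk (truncIdeal ℤ d) (rhsFactor rs) = 1 := by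
  obtain ⟨j, i⟩ := rs
  have zero : Ideal.Quotient.mk (truncIdeal ℤ d) (z ^ i * u ^ j * (u * T)) = 0 := by
    obtain hi | hj : d 0 < i ∨ d 1 < j := by
      simp only [factorsUpTo, Finset.mem_product, Finset.mem_range] at hrs
      omega
    · simp [mk_truncIdeal_X_pow hi]
    · simp [mk_truncIdeal_X_pow hj]
  rw [rhsFactor_mk, map_ringInverse _ (isUnit_one_sub_mul i j), map_sub, map_one, zero, sub_zero,
    Ring.inverse_one]

lemma mk_sum_lhsTerm_eq :
    Ideal.Quotient.mk (truncIdeal ℤ d) (∑ p ∈ partitionsUpTo d, lhsTerm p) =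
      Ideal.Quotient.mk (truncIdeal ℤ d) (∏ rs ∈ factorsUpTo d, rhsFactor rs) := by
  set φ := Ideal.Quotient.mk (truncIdeal ℤ d)
  have hX {i : Fin 3} : (X i : MvPowerSeries (Fin 3) ℤ) ≠ 0 :=
    nonZeroDivisors.ne_zero X_mem_nonzeroDivisors
  have := NoZeroDivisors.to_isDomain (MvPowerSeries (Fin 3) ℤ)
  have hzu : HookFactorsInvertible z u := hookFactorsInvertible_X 0 1
  have identity := prod_mul_sum_hookWeight (2 * d 1 + 2) hX hX hzu φ
    (mk_truncIdeal_X_pow (d 0).lt_succ_self) (mk_u_mul_T_pow_eq_zero d (d 1).lt_succ_self)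
  have lhs_eq : φ (∑ p ∈ partitionsUpTo d, lhsTerm p) = ∑ s ∈ Finset.range (d 1 + 1),
      (∑ p : Nat.Partition s, hookWeight (φ z) (φ u) (2 * d 1 + 2) p) * φ (u * T) ^ s := by
    rw [partitionsUpTo, Finset.sum_sigma, map_sum]
    refine Finset.sum_congr rfl fun s hs => ?_
    rw [map_sum, Finset.sum_mul]
    refine Finset.sum_congr rfl fun p _ => ?_
    rw [lhsTerm_mk, hookWeight_eq_prod_boxWeight _ (mk_truncIdeal_X_pow (d 1).lt_succ_self)]
    · simp only [map_mul, map_prod, map_pow, map_boxWeight φ hzu]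
    · have := Finset.mem_range.1 hs
      omega
  have rhs_mul : φ (∏ rs ∈ factorsUpTo d, rhsFactor rs) *
      ∏ i ∈ Finset.range (d 0 + 1), ∏ j ∈ Finset.range (2 * d 1 + 2),
        (1 - φ z ^ i * φ u ^ j * φ (u * T)) = 1 := by
    rw [factorsUpTo, Finset.prod_comm, ← Finset.prod_product', map_prod,
      ← Finset.prod_mul_distrib]
    refine Finset.prod_eq_one fun ⟨j, i⟩ _ => ?_
    simp only [← map_mul, ← map_pow, ← map_one φ, ← map_sub, rhsFactor_mk,
      Ring.inverse_mul_cancel _ (isUnit_one_sub_mul i j)]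
  rw [lhs_eq, left_inv_eq_right_inv rhs_mul identity]

/-- The common value of the two sides, each of whose coefficients is read off a finite subsum. -/
noncomputable def hookSum : MvPowerSeries (Fin 3) ℤ :=
  fun d => coeff d (∑ p ∈ partitionsUpTo d, lhsTerm p)

instance : T2Space (MvPowerSeries (Fin 3) ℤ) :=
  inferInstanceAs (T2Space ((Fin 3 →₀ ℕ) → ℤ))

lemma hasSum_lhsTerm : HasSum lhsTerm hookSum :=
  hasSum_of_mk_truncIdeal_eq_zero partitionsUpTo (fun d _ => mk_lhsTerm_eq_zero d) fun _ => rfl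

lemma hasProd_rhsFactor : HasProd rhsFactor hookSum :=
  hasProd_of_mk_truncIdeal_eq_one factorsUpTo (fun d _ => mk_rhsFactor_eq_one d) fun d =>
    (coeff_eq_of_mk_truncIdeal_eq (mk_sum_lhsTerm_eq d) :)

end BothSides

/-- In `ℤ[[z,u,T]]`:
`Σ_λ T^{|λ|} ∏_{boxes} u^{2l+1}(1−z^{a+1}u^{l})⁻¹(1−z^{a}u^{l+1})⁻¹
  = ∏_{r≥1, s≥0} (1−z^{s}u^{r}T)⁻¹`,
with the sum over all partitions converging (being `Summable`) and the infinite product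
converging (being `Multipliable`) in the formal power series topology. -/
theorem statement17 :
    Summable lhsTerm ∧ Multipliable rhsFactor ∧
      ∑' p : Σ m : ℕ, Nat.Partition m, lhsTerm p = ∏' rs : ℕ × ℕ, rhsFactor rs :=
  ⟨hasSum_lhsTerm.summable, hasProd_rhsFactor.multipliable,
    hasSum_lhsTerm.tsum_eq.trans hasProd_rhsFactor.tprod_eq.symm⟩

end Statement17
end

section
/- Let g ≥ 0 and n ≥ 0 be integers. In the polynomial ring ℚ[α,β,γ], for nonnegative integers r, s, t satisfying t ≤ g, r + 3s + 3t > 3g − 3 + n and r + 2s + 2t ≥ 2g − 2 + n, set c := r + 3s + 2t − 2g + 2 − n and ρ^{n,g}_{r,s,t} := Σ_{i=0}^{min(r,s,g−t)} (c−i)! · α^{r−i}/(r−i)! · β^{s−i}/(s−i)! · (2γ)^{t+i}/i! (note c ≥ s ≥ i, so (c−i)! is well defined). Let I^g_n ⊆ ℚ[α,β,γ] be the ideal generated by γ^{g+1} together with all such polynomials ρ^{n,g}_{r,s,t}. Assign weights 2, 2, 4 to α, β, γ respectively. If x ∈ ℚ[α,β,γ] is weighted-homogeneous of weight w with 0 ≤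 w < 3g − 3 + n, and x·α^{3g−3+n−w} ∈ I^g_n, then x ∈ I^g_n. -/
namespace Statement19

open MvPolynomial

/-- The relation
`ρ^{n,g}_{r,s,t} = Σ_{i=0}^{min(r,s,g−t)} (c−i)!·α^{r−i}/(r−i)!·β^{s−i}/(s−i)!·(2γ)^{t+i}/i!`
in `ℚ[α,β,γ]` (with `α = X 0`, `β = X 1`, `γ = X 2`), where
`c = r+3s+2t−2g+2−n` (a nonnegative integer `≥ s` under the intended constraints,
written with truncated subtraction). -/
noncomputable def rho (g n r s t : ℕ) : MvPolynomial (Fin 3) ℚ :=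
  ∑ i ∈ Finset.range (min r (min s (g - t)) + 1),
    C ((((r + 3 * s + 2 * t + 2 - (2 * g + n) - i).factorial : ℚ))
        / ((r - i).factorial : ℚ) / ((s - i).factorial : ℚ) / (i.factorial : ℚ))
      * X 0 ^ (r - i) * X 1 ^ (s - i) * (C 2 * X 2) ^ (t + i)

/-- The ideal `I^g_n ⊆ ℚ[α,β,γ]` generated by `γ^{g+1}` together with the relations
`ρ^{n,g}_{r,s,t}` for all `r,s,t ≥ 0` with `t ≤ g`, `r+3s+3t > 3g−3+n` and
`r+2s+2t ≥ 2g−2+n`. -/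
noncomputable def relIdeal (g n : ℕ) : Ideal (MvPolynomial (Fin 3) ℚ) :=
  Ideal.span (insert ((X 2 : MvPolynomial (Fin 3) ℚ) ^ (g + 1))
    {p | ∃ r s t : ℕ, t ≤ g ∧
      3 * (g : ℤ) - 3 + n < (r : ℤ) + 3 * s + 3 * t ∧
      2 * (g : ℤ) - 2 + n ≤ (r : ℤ) + 2 * s + 2 * t ∧
      p = rho g n r s t})

/-!
Give `α`, `β`, `γ` the bidegrees `(1, 0)`, `(0, 1)`, `(1, 1)`. In bidegree `(a, b)` there is, for
each `k ≤ min a b`, one monomial `α^(a-k) β^(b-k) γ^k`, and after dividing by suitable factorials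
the coefficients of `ρ` become the values at `k` of a polynomial, with roots `0, ..., t - 1`. By
Newton interpolation along these roots, the bidegree-`(a, b)` part of the ideal modulo `γ^(g+1)`
consists of all elements whose normalised coefficients are the values of a polynomial of degree less
than `a + 2b + min b g + 3 - 3g - n`.

Multiplication by `α^l` multiplies this polynomial by `∏_{j < l} (a + 1 + j - k)`. Conversely, in
`x α^l` the coefficients with `k > a` vanish. These zeros either show that the product divides the
polynomial of `x α^l`, and the quotient meets the degree bound for `x`, or, by the bound on the
weight of `x`, they outnumber the degree, so that the polynomial is zero.
-/

section PolynomialLemmas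

lemma mem_degreeLT_of_natDegree_lt {R : Type*} [Semiring R] {P : Polynomial R} {N : ℕ}
    (h : P.natDegree < N) : P ∈ Polynomial.degreeLT R N :=
  Polynomial.mem_degreeLT.2 (Polynomial.degree_le_natDegree.trans_lt (by exact_mod_cast h))

lemma mul_mem_degreeLT {R : Type*} [Semiring R] {P Q : Polynomial R} {d e N : ℕ}
    (hP : P ∈ Polynomial.degreeLT R d) (hQ : Q.natDegree ≤ e) (hN : d ≠ 0 → d + e ≤ N) :
    P * Q ∈ Polynomial.degreeLT R N := by
  rw [Polynomial.mem_degreeLT] at hP ⊢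
  rcases eq_or_ne (P * Q) 0 with h | h
  · simp [h]
  have hP0 : P ≠ 0 := left_ne_zero_of_mul h
  rw [← Polynomial.natDegree_lt_iff_degree_lt hP0] at hP
  rw [← Polynomial.natDegree_lt_iff_degree_lt h]
  have := Polynomial.natDegree_mul_le (p := P) (q := Q)
  omega

lemma mul_mem_degreeLT_iff {R : Type*} [Semiring R] [NoZeroDivisors R] {P Q : Polynomial R} {d : ℕ}
    (hP : P ≠ 0) :
    P * Q ∈ Polynomial.degreeLT R (P.natDegree + d) ↔ Q ∈ Polynomial.degreeLT R d := by
  simp only [Polynomial.mem_degreeLT]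
  rw [Polynomial.degree_mul, Polynomial.degree_eq_natDegree hP, Nat.cast_add]
  exact WithBot.add_lt_add_iff_left WithBot.coe_ne_bot

lemma degreeLT_le_of_descPochhammer_mul_mem {K : Type*} [Field K]
    {S : Submodule K (Polynomial K)} {N : ℕ}
    (h : ∀ t < N, ∃ W ∈ Polynomial.degreeLT K (N - t),
      W.eval (t : K) ≠ 0 ∧ descPochhammer K t * W ∈ S) :
    Polynomial.degreeLT K N ≤ S := by
  suffices H : ∀ d t, t + d = N → ∀ Q ∈ Polynomial.degreeLT K d, descPochhammer K t * Q ∈ S from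
    fun Q hQ => by simpa using H N 0 (zero_add N) Q hQ
  intro d
  induction d with
  | zero =>
    intro t _ Q hQ
    obtain rfl : Q = 0 := by simpa [Polynomial.mem_degreeLT] using hQ
    simp
  | succ d ih =>
    rintro t rfl Q hQ
    obtain ⟨W, hWdeg, hWt, hWS⟩ := h t (by omega)
    rw [Nat.add_sub_cancel_left] at hWdeg
    set c := Q.eval (t : K) / W.eval (t : K) with hc
    obtain ⟨R, hR⟩ : Polynomial.X - Polynomial.C (t : K) ∣ Q - c • W := by
      rw [Polynomial.dvd_iff_isRoot]
      simp [hc, hWt]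
    have hRdeg : R ∈ Polynomial.degreeLT K d := by
      rw [← mul_mem_degreeLT_iff (Polynomial.X_sub_C_ne_zero (t : K)), ← hR,
        Polynomial.natDegree_X_sub_C, add_comm]
      exact sub_mem hQ (Submodule.smul_mem _ c hWdeg)
    have hsplit : descPochhammer K t * Q
        = c • (descPochhammer K t * W) + descPochhammer K (t + 1) * R := by
      rw [descPochhammer_succ_right, ← Polynomial.C_eq_natCast, mul_assoc, ← hR, mul_sub,
        mul_smul_comm]
      abel
    rw [hsplit]
    exact add_mem (S.smul_mem c hWS) (ih (t + 1) (by omega) R hRdeg)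

lemma exists_eq_add_single {σ : Type*} {m : σ →₀ ℕ} {s : σ} {l : ℕ} (h : l ≤ m s) :
    ∃ m', m = m' + Finsupp.single s l :=
  ⟨m - Finsupp.single s l, (tsub_add_cancel_of_le (Finsupp.single_le_iff.2 h)).symm⟩

lemma X_pow_dvd_iff_forall_mem_support {σ R : Type*} [CommSemiring R] {p : MvPolynomial σ R}
    {s : σ} {d : ℕ} : X s ^ d ∣ p ↔ ∀ m ∈ p.support, d ≤ m s := by
  rw [← Ideal.mem_span_singleton, X_pow_eq_monomial]
  simpa using mem_ideal_span_monomial_image (x := p) (s := {Finsupp.single s d})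

/-- The polynomial `∏_{j < l} (M + 1 + j - X)`, whose value at a natural number `k ≤ M` is
`(M - k + l)! / (M - k)!`. -/
noncomputable def factorialRatio (R : Type*) [CommRing R] (M l : ℕ) : Polynomial R :=
  ∏ j ∈ Finset.range l, (Polynomial.C ((M + 1 + j : ℕ) : R) - Polynomial.X)

namespace factorialRatio

section CommRing

variable {R : Type*} [CommRing R]

lemma eval_natCast_mul_factorial {M k : ℕ} (l : ℕ) (hk : k ≤ M) :
    (factorialRatio R M l).eval (k : R) * ((M - k).factorial : R) =
      ((M - k + l).factorial : R) := by
  have heval : (factorialRatio R M l).eval (k : R) = ((M - k + 1).ascFactorial l : ℕ) := by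
    rw [factorialRatio, Polynomial.eval_prod, Nat.ascFactorial_eq_prod_range, Nat.cast_prod]
    refine Finset.prod_congr rfl fun j _ => ?_
    rw [Polynomial.eval_sub, Polynomial.eval_C, Polynomial.eval_X, ← Nat.cast_sub (by omega)]
    congr 1
    omega
  rw [heval, mul_comm, ← Nat.cast_mul, Nat.factorial_mul_ascFactorial]

lemma eval_natCast_ne_zero [CharZero R] {M k : ℕ} (l : ℕ) (hk : k ≤ M) :
    (factorialRatio R M l).eval (k : R) ≠ 0 := by
  refine left_ne_zero_of_mul (b := ((M - k).factorial : R)) ?_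
  rw [eval_natCast_mul_factorial l hk]
  exact_mod_cast Nat.factorial_ne_zero _

lemma eval_natCast_eq_zero {M l k : ℕ} (hMk : M < k) (hkl : k ≤ M + l) :
    (factorialRatio R M l).eval (k : R) = 0 := by
  rw [factorialRatio, Polynomial.eval_prod]
  refine Finset.prod_eq_zero (Finset.mem_range.2 (by omega : k - (M + 1) < l)) ?_
  simp [show M + 1 + (k - (M + 1)) = k by omega]

lemma ne_zero [IsDomain R] (M l : ℕ) : factorialRatio R M l ≠ 0 :=
  Finset.prod_ne_zero_iff.2 fun j _ =>
    sub_ne_zero.2 (Polynomial.X_ne_C ((M + 1 + j : ℕ) : R)).symm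

lemma natDegree_eq [IsDomain R] (M l : ℕ) : (factorialRatio R M l).natDegree = l := by
  have hfactor (c : R) : (Polynomial.C c - Polynomial.X).natDegree = 1 := by
    rw [← neg_sub, Polynomial.natDegree_neg, Polynomial.natDegree_X_sub_C]
  rw [factorialRatio, Polynomial.natDegree_prod _ _ (Finset.prod_ne_zero_iff.1 (ne_zero M l)),
    Finset.sum_congr rfl fun j _ => hfactor _]
  simp

end CommRing

lemma dvd_of_forall_eval_eq_zero {K : Type*} [Field K] [CharZero K] {M l : ℕ} {P : Polynomial K}
    (h : ∀ k, M < k → k ≤ M + l → P.eval (k : K) = 0) : factorialRatio K M l ∣ P := by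
  refine Finset.prod_dvd_of_coprime (fun i _ j _ hij => ?_) fun j hj => ?_
  · rw [Function.onFun, ← neg_sub, ← neg_sub Polynomial.X, IsCoprime.neg_neg_iff]
    exact Polynomial.pairwise_coprime_X_sub_C (s := fun j : ℕ => ((M + 1 + j : ℕ) : K))
      (fun i j h => by simpa using h) hij
  · rw [← neg_sub, neg_dvd, Polynomial.dvd_iff_isRoot]
    have := Finset.mem_range.1 hj
    exact h _ (by omega) (by omega)

end factorialRatio

end PolynomialLemmas

section Profiles

/-- The exponent vector of the monomial `α^i β^j γ^k`. -/
noncomputable def expVec (i j k : ℕ) : Fin 3 →₀ ℕ :=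
  Finsupp.equivFunOnFinite.symm ![i, j, k]

section ExpVec

variable (i j k : ℕ)

@[simp] lemma expVec_zero : expVec i j k 0 = i := rfl

@[simp] lemma expVec_one : expVec i j k 1 = j := rfl

@[simp] lemma expVec_two : expVec i j k 2 = k := rfl

end ExpVec

lemma expVec_eq_iff {i j k : ℕ} {m : Fin 3 →₀ ℕ} :
    expVec i j k = m ↔ i = m 0 ∧ j = m 1 ∧ k = m 2 := by
  simp [DFunLike.ext_iff, Fin.forall_fin_succ]

lemma monomial_expVec (i j k : ℕ) (c : ℚ) :
    monomial (expVec i j k) c = C c * X 0 ^ i * X 1 ^ j * X 2 ^ k := by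
  rw [monomial_eq, Finsupp.prod_fintype _ _ fun _ => pow_zero _, Fin.prod_univ_three, mul_assoc,
    mul_assoc, mul_assoc]
  rfl

/-- The normalising factor of the coefficient of `α^i β^j γ^k`, where `m = (i, j, k)`. It is chosen
so that, after division by it, the coefficients of the relations `ρ` in a fixed bidegree are the
values of a polynomial at `k`. -/
noncomputable def coeffWeight (g : ℕ) (m : Fin 3 →₀ ℕ) : ℚ :=
  2 ^ m 2 * ((max (m 1 + m 2) g - m 2).factorial : ℚ)
    / ((m 0).factorial * (m 1).factorial * (m 2).factorial)

lemma coeffWeight_ne_zero (g : ℕ) (m : Fin 3 →₀ ℕ) : coeffWeight g m ≠ 0 := by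
  unfold coeffWeight
  positivity

lemma coeffWeight_add_single_zero (g : ℕ) (m : Fin 3 →₀ ℕ) (l : ℕ) :
    coeffWeight g (m + Finsupp.single 0 l) * (factorialRatio ℚ (m 0 + m 2) l).eval (m 2 : ℚ)
      = coeffWeight g m := by
  have hfac := factorialRatio.eval_natCast_mul_factorial (R := ℚ) l (Nat.le_add_left (m 2) (m 0))
  rw [Nat.add_sub_cancel] at hfac
  have hne := factorialRatio.eval_natCast_ne_zero (R := ℚ) l (Nat.le_add_left (m 2) (m 0))
  simp only [coeffWeight, Finsupp.add_apply, Finsupp.single_apply, if_true, Fin.reduceEq, if_false,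
    add_zero, ← hfac]
  field_simp

lemma coeffWeight_add_single_one_of_lt {g : ℕ} {m : Fin 3 →₀ ℕ} (h : m 1 + m 2 < g) :
    coeffWeight g (m + Finsupp.single 1 1) * (factorialRatio ℚ (m 1 + m 2) 1).eval (m 2 : ℚ)
      = coeffWeight g m := by
  have hfac := factorialRatio.eval_natCast_mul_factorial (R := ℚ) 1 (Nat.le_add_left (m 2) (m 1))
  rw [Nat.add_sub_cancel] at hfac
  have hne := factorialRatio.eval_natCast_ne_zero (R := ℚ) 1 (Nat.le_add_left (m 2) (m 1))
  simp only [coeffWeight, Finsupp.add_apply, Finsupp.single_apply, if_true, Fin.reduceEq, if_false,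
    add_zero, ← hfac, max_eq_right h.le, max_eq_right (by omega : m 1 + 1 + m 2 ≤ g)]
  field_simp

lemma coeffWeight_add_single_one_of_le {g : ℕ} {m : Fin 3 →₀ ℕ} (h : g ≤ m 1 + m 2) :
    coeffWeight g (m + Finsupp.single 1 1) = coeffWeight g m := by
  simp only [coeffWeight, Finsupp.add_apply, Finsupp.single_apply, if_true, Fin.reduceEq, if_false,
    add_zero, max_eq_left h, max_eq_left (by omega : g ≤ m 1 + 1 + m 2), Nat.add_sub_cancel,
    Nat.factorial_succ]
  push_cast
  field_simp

lemma coeffWeight_add_single_two_of_lt {g : ℕ} {m : Fin 3 →₀ ℕ} (h : m 1 + m 2 < g) :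
    coeffWeight g (m + Finsupp.single 2 1) * ((m 2 + 1) * (g - m 2) / 2) = coeffWeight g m := by
  obtain ⟨d, hd⟩ : ∃ d, g = m 2 + 1 + d := ⟨g - (m 2 + 1), by omega⟩
  have hsub : (g : ℚ) - m 2 = d + 1 := by rw [hd]; push_cast; ring
  simp only [coeffWeight, Finsupp.add_apply, Finsupp.single_apply, if_true, Fin.reduceEq, if_false,
    add_zero, max_eq_right h.le, max_eq_right (by omega : m 1 + (m 2 + 1) ≤ g), hsub,
    (by omega : g - m 2 = d + 1), (by omega : g - (m 2 + 1) = d), Nat.factorial_succ]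
  push_cast
  field_simp
  ring

lemma coeffWeight_add_single_two_of_le {g : ℕ} {m : Fin 3 →₀ ℕ} (h : g ≤ m 1 + m 2) :
    coeffWeight g (m + Finsupp.single 2 1) * ((m 2 + 1) / 2) = coeffWeight g m := by
  simp only [coeffWeight, Finsupp.add_apply, Finsupp.single_apply, if_true, Fin.reduceEq, if_false,
    add_zero, max_eq_left h, max_eq_left (by omega : g ≤ m 1 + (m 2 + 1)), Nat.add_sub_cancel,
    Nat.factorial_succ]
  push_cast
  field_simp
  ring

/-- `P` is a profile of `p` in bidegree `(a, b)`, where `α`, `β`, `γ` have bidegrees `(1, 0)`,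
`(0, 1)`, `(1, 1)`: modulo `γ^(g+1)`, the normalised coefficient of `α^(a-k) β^(b-k) γ^k` in `p` is
`P(k)`. -/
def IsProfile (g a b : ℕ) (p : MvPolynomial (Fin 3) ℚ) (P : Polynomial ℚ) : Prop :=
  ∀ m : Fin 3 →₀ ℕ, m 0 + m 2 = a → m 1 + m 2 = b → m 2 ≤ g →
    coeff m p = coeffWeight g m * P.eval (m 2 : ℚ)

namespace IsProfile

variable {g a b : ℕ} {p q : MvPolynomial (Fin 3) ℚ} {P Q : Polynomial ℚ}

lemma zero : IsProfile g a b 0 0 := fun m _ _ _ => by simp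

lemma add (hp : IsProfile g a b p P) (hq : IsProfile g a b q Q) :
    IsProfile g a b (p + q) (P + Q) := fun m ha hb hg => by
  rw [coeff_add, hp m ha hb hg, hq m ha hb hg, Polynomial.eval_add, mul_add]

lemma smul (c : ℚ) (hp : IsProfile g a b p P) : IsProfile g a b (c • p) (c • P) :=
  fun m ha hb hg => by
    rw [coeff_smul, hp m ha hb hg, Polynomial.eval_smul, smul_eq_mul, smul_eq_mul, mul_left_comm]

lemma mul_X_zero_pow_iff {l : ℕ} :
    IsProfile g (a + l) b (p * X 0 ^ l) (factorialRatio ℚ a l * P) ↔ IsProfile g a b p P := by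
  rw [X_pow_eq_monomial]
  constructor
  · rintro h m rfl hb hg
    have hm := h (m + Finsupp.single 0 l) (by simp [add_right_comm]) (by simpa using hb)
      (by simpa using hg)
    rw [coeff_mul_monomial, mul_one] at hm
    rw [hm, Polynomial.eval_mul, ← coeffWeight_add_single_zero g m l, mul_assoc]
    simp
  · intro h m ha hb hg
    rw [Polynomial.eval_mul]
    by_cases hl : l ≤ m 0
    · obtain ⟨m, rfl⟩ := exists_eq_add_single hl
      simp only [Finsupp.add_apply, Finsupp.single_apply, if_true, Fin.reduceEq, if_false,
        add_zero] at ha hb hg ⊢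
      obtain rfl : m 0 + m 2 = a := by omega
      rw [coeff_mul_monomial, mul_one, h m rfl hb hg, ← coeffWeight_add_single_zero g m l,
        mul_assoc]
    · rw [factorialRatio.eval_natCast_eq_zero (by omega) (by omega), coeff_mul_monomial',
        if_neg (by rwa [Finsupp.single_le_iff])]
      simp

lemma mul_X_of_forall_eq_zero {s : Fin 3}
    (h : ∀ m : Fin 3 →₀ ℕ, m 0 + m 2 = a → m 1 + m 2 = b → m s = 0) :
    IsProfile g a b (p * X s) 0 := fun m ha hb _ => by
  simp [coeff_mul_X', h m ha hb]

lemma mul_X_one_of_lt (hbg : b < g) (hp : IsProfile g a b p P) :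
    IsProfile g a (b + 1) (p * X 1) (P * factorialRatio ℚ b 1) := by
  intro m ha hb hg
  rw [Polynomial.eval_mul]
  rcases Nat.eq_zero_or_pos (m 1) with h0 | hpos
  · rw [factorialRatio.eval_natCast_eq_zero (by omega) (by omega)]
    simp [coeff_mul_X', h0]
  · obtain ⟨m, rfl⟩ := exists_eq_add_single hpos
    simp only [Finsupp.add_apply, Finsupp.single_apply, if_true, Fin.reduceEq, if_false,
      add_zero] at ha hb hg ⊢
    obtain rfl : m 1 + m 2 = b := by omega
    rw [coeff_mul_X, hp m ha rfl hg, ← coeffWeight_add_single_one_of_lt hbg, mul_assoc,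
      mul_comm (Polynomial.eval _ P)]

lemma mul_X_one_of_le (hgb : g ≤ b) (hp : IsProfile g a b p P) :
    IsProfile g a (b + 1) (p * X 1) P := by
  intro m ha hb hg
  obtain ⟨m, rfl⟩ := exists_eq_add_single (by omega : 1 ≤ m 1)
  simp only [Finsupp.add_apply, Finsupp.single_apply, if_true, Fin.reduceEq, if_false,
    add_zero] at ha hb hg ⊢
  rw [coeff_mul_X, hp m ha (by omega) hg, coeffWeight_add_single_one_of_le (by omega)]

lemma mul_X_two_of_lt (hbg : b < g) (hp : IsProfile g a b p P) :
    IsProfile g (a + 1) (b + 1) (p * X 2)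
      (Polynomial.taylor (-1) P *
        (Polynomial.C (1 / 2) * Polynomial.X * (Polynomial.C ((g : ℚ) + 1) - Polynomial.X))) := by
  intro m ha hb hg
  rcases Nat.eq_zero_or_pos (m 2) with h0 | hpos
  · simp [coeff_mul_X', h0]
  · obtain ⟨m, rfl⟩ := exists_eq_add_single hpos
    simp only [Finsupp.add_apply, Finsupp.single_apply, if_true, Fin.reduceEq, if_false,
      add_zero] at ha hb hg ⊢
    rw [coeff_mul_X, hp m (by omega) (by omega) (by omega),
      ← coeffWeight_add_single_two_of_lt (by omega : m 1 + m 2 < g)]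
    simp only [Polynomial.eval_mul, Polynomial.taylor_eval, Polynomial.eval_sub, Polynomial.eval_C,
      Polynomial.eval_X, Nat.cast_add, Nat.cast_one, add_neg_cancel_right]
    ring

lemma mul_X_two_of_le (hgb : g ≤ b) (hp : IsProfile g a b p P) :
    IsProfile g (a + 1) (b + 1) (p * X 2)
      (Polynomial.taylor (-1) P * (Polynomial.C (1 / 2) * Polynomial.X)) := by
  intro m ha hb hg
  rcases Nat.eq_zero_or_pos (m 2) with h0 | hpos
  · simp [coeff_mul_X', h0]
  · obtain ⟨m, rfl⟩ := exists_eq_add_single hpos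
    simp only [Finsupp.add_apply, Finsupp.single_apply, if_true, Fin.reduceEq, if_false,
      add_zero] at ha hb hg ⊢
    rw [coeff_mul_X, hp m (by omega) (by omega) (by omega),
      ← coeffWeight_add_single_two_of_le (by omega : g ≤ m 1 + m 2)]
    simp only [Polynomial.eval_mul, Polynomial.taylor_eval, Polynomial.eval_C, Polynomial.eval_X,
      Nat.cast_add, Nat.cast_one, add_neg_cancel_right]
    ring

lemma eval_eq_zero_of_mul_X_zero_pow {l k : ℕ} (h : IsProfile g (a + l) b (p * X 0 ^ l) P)
    (hak : a < k) (hkl : k ≤ a + l) (hkb : k ≤ b) (hkg : k ≤ g) : P.eval (k : ℚ) = 0 := by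
  have hcoeff := h (expVec (a + l - k) (b - k) k) (Nat.sub_add_cancel hkl) (Nat.sub_add_cancel hkb)
    hkg
  rw [X_pow_eq_monomial, coeff_mul_monomial', if_neg (by
    rw [Finsupp.single_le_iff, expVec_zero]; omega)] at hcoeff
  exact (mul_eq_zero.1 hcoeff.symm).resolve_left (coeffWeight_ne_zero g _)

/-- If the forced zeros `a < k ≤ min b g` of `P` do not exhaust those of `factorialRatio ℚ a l`,
they outnumber its degree and `P = 0`. -/
lemma factorialRatio_dvd {l d : ℕ} (h : IsProfile g (a + l) b (p * X 0 ^ l) P)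
    (hP : P ∈ Polynomial.degreeLT ℚ d) (hd : min b g < a + l → d ≤ min b g - a) :
    factorialRatio ℚ a l ∣ P := by
  rcases lt_or_ge (min b g) (a + l) with hlt | hle
  · have hzero : P = 0 := by
      refine Polynomial.eq_zero_of_degree_lt_of_eval_index_eq_zero (v := fun k : ℕ => (k : ℚ))
        (Finset.Ioc a (min b g)) Nat.cast_injective.injOn ?_ fun k hk => ?_
      · rw [Nat.card_Ioc]
        exact Polynomial.mem_degreeLT.1 (Polynomial.degreeLT_mono (hd hlt) hP)
      · rw [Finset.mem_Ioc] at hk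
        exact h.eval_eq_zero_of_mul_X_zero_pow hk.1 (by omega) (by omega) (by omega)
    rw [hzero]
    exact dvd_zero _
  · exact factorialRatio.dvd_of_forall_eval_eq_zero fun k hak hkl =>
      h.eval_eq_zero_of_mul_X_zero_pow hak hkl (by omega) (by omega)

lemma zero_of_weightedTotalDegree_lt (h : weightedTotalDegree ![2, 2, 4] p < 2 * a + 2 * b) :
    IsProfile g a b p 0 := by
  intro m ha hb _
  rw [Polynomial.eval_zero, mul_zero]
  refine notMem_support_iff.1 fun hm => ?_
  have hle := le_weightedTotalDegree ![2, 2, 4] hm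
  simp only [Finsupp.weight_eq_sum, Fin.sum_univ_three, smul_eq_mul, Matrix.cons_val] at hle
  omega

end IsProfile

/-- The strict degree bound on the profiles in bidegree `(a, b)` of the elements of
`relIdeal g n`. The subtraction truncates: where the bound is zero, the only profile is zero. -/
def degBound (g n a b : ℕ) : ℕ :=
  a + 2 * b + min b g + 3 - (3 * g + n)

/-- The polynomials having in every bidegree a profile of degree less than `degBound`: the
description of `relIdeal g n` through coefficients, see `mem_relIdeal_iff`. -/
def profileSubmodule (g n : ℕ) : Submodule ℚ (MvPolynomial (Fin 3) ℚ) where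
  carrier := {p | ∀ a b, ∃ P ∈ Polynomial.degreeLT ℚ (degBound g n a b), IsProfile g a b p P}
  zero_mem' _ _ := ⟨0, zero_mem _, IsProfile.zero⟩
  add_mem' hp hq a b := by
    obtain ⟨P, hP, hpP⟩ := hp a b
    obtain ⟨Q, hQ, hqQ⟩ := hq a b
    exact ⟨P + Q, add_mem hP hQ, hpP.add hqQ⟩
  smul_mem' c p hp a b := by
    obtain ⟨P, hP, hpP⟩ := hp a b
    exact ⟨c • P, Submodule.smul_mem _ c hP, hpP.smul c⟩

variable {g n : ℕ} {p : MvPolynomial (Fin 3) ℚ}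

lemma mul_X_zero_mem_profileSubmodule (hp : p ∈ profileSubmodule g n) :
    p * X 0 ∈ profileSubmodule g n := by
  rintro (_ | a) b
  · exact ⟨0, zero_mem _, IsProfile.mul_X_of_forall_eq_zero fun m ha _ => by omega⟩
  obtain ⟨P, hP, hpP⟩ := hp a b
  refine ⟨factorialRatio ℚ a 1 * P, ?_, by
    simpa only [pow_one] using (IsProfile.mul_X_zero_pow_iff (l := 1)).2 hpP⟩
  rw [mul_comm]
  refine mul_mem_degreeLT hP (factorialRatio.natDegree_eq a 1).le fun _ => ?_
  simp only [degBound] at *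
  omega

lemma mul_X_one_mem_profileSubmodule (hp : p ∈ profileSubmodule g n) :
    p * X 1 ∈ profileSubmodule g n := by
  rintro a (_ | b)
  · exact ⟨0, zero_mem _, IsProfile.mul_X_of_forall_eq_zero fun m _ hb => by omega⟩
  obtain ⟨P, hP, hpP⟩ := hp a b
  rcases lt_or_ge b g with hbg | hgb
  · refine ⟨_, ?_, hpP.mul_X_one_of_lt hbg⟩
    refine mul_mem_degreeLT hP (factorialRatio.natDegree_eq b 1).le fun _ => ?_
    simp only [degBound] at *
    omega
  · refine ⟨P, Polynomial.degreeLT_mono ?_ hP, hpP.mul_X_one_of_le hgb⟩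
    simp only [degBound]
    omega

lemma mul_X_two_mem_profileSubmodule (hp : p ∈ profileSubmodule g n) :
    p * X 2 ∈ profileSubmodule g n := by
  rintro (_ | a) (_ | b)
  iterate 3 exact ⟨0, zero_mem _, IsProfile.mul_X_of_forall_eq_zero fun m ha hb => by omega⟩
  obtain ⟨P, hP, hpP⟩ := hp a b
  have hshift := Polynomial.taylor_mem_degreeLT (r := -1).2 hP
  rcases lt_or_ge b g with hbg | hgb
  · refine ⟨_, mul_mem_degreeLT hshift (e := 2) (by compute_degree) fun _ => ?_,
      hpP.mul_X_two_of_lt hbg⟩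
    simp only [degBound] at *
    omega
  · refine ⟨_, mul_mem_degreeLT hshift (e := 1) (by compute_degree) fun _ => ?_,
      hpP.mul_X_two_of_le hgb⟩
    simp only [degBound] at *
    omega

lemma mul_mem_profileSubmodule (q : MvPolynomial (Fin 3) ℚ) (hp : p ∈ profileSubmodule g n) :
    q * p ∈ profileSubmodule g n := by
  induction q using MvPolynomial.induction_on generalizing p with
  | C c => simpa only [smul_eq_C_mul] using Submodule.smul_mem _ c hp
  | add q₁ q₂ h₁ h₂ => simpa only [add_mul] using add_mem (h₁ hp) (h₂ hp)
  | mul_X q s ih =>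
    rw [mul_assoc, mul_comm (X s) p]
    apply ih
    fin_cases s
    · exact mul_X_zero_mem_profileSubmodule hp
    · exact mul_X_one_mem_profileSubmodule hp
    · exact mul_X_two_mem_profileSubmodule hp

lemma mem_profileSubmodule_of_mul_X_zero_pow_mem {l : ℕ}
    (hdeg : weightedTotalDegree ![2, 2, 4] p + l + 3 ≤ 3 * g + n)
    (hp : p * X 0 ^ l ∈ profileSubmodule g n) : p ∈ profileSubmodule g n := by
  intro a b
  rcases lt_or_ge (weightedTotalDegree ![2, 2, 4] p) (2 * a + 2 * b) with hlt | hle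
  · exact ⟨0, zero_mem _, IsProfile.zero_of_weightedTotalDegree_lt hlt⟩
  obtain ⟨P, hP, hpP⟩ := hp (a + l) b
  obtain ⟨Q, rfl⟩ : factorialRatio ℚ a l ∣ P := hpP.factorialRatio_dvd hP fun _ => by
    simp only [degBound]
    omega
  refine ⟨Q, ?_, IsProfile.mul_X_zero_pow_iff.1 hpP⟩
  rw [← mul_mem_degreeLT_iff (factorialRatio.ne_zero a l), factorialRatio.natDegree_eq]
  refine Polynomial.degreeLT_mono ?_ hP
  simp only [degBound]
  omega

end Profiles

section Relations

/-- The polynomial with profile `Q` in bidegree `(a, b)`, all of whose monomials have that bidegree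
and are not divisible by `γ^(g+1)`. -/
noncomputable def ofProfile (g a b : ℕ) : Polynomial ℚ →ₗ[ℚ] MvPolynomial (Fin 3) ℚ :=
  ∑ k ∈ Finset.range (min a (min b g) + 1),
    monomial (expVec (a - k) (b - k) k) ∘ₗ
      (coeffWeight g (expVec (a - k) (b - k) k) • Polynomial.leval (k : ℚ))

variable {g n : ℕ}

lemma ofProfile_apply (g a b : ℕ) (Q : Polynomial ℚ) :
    ofProfile g a b Q = ∑ k ∈ Finset.range (min a (min b g) + 1),
      monomial (expVec (a - k) (b - k) k)
        (coeffWeight g (expVec (a - k) (b - k) k) * Q.eval (k : ℚ)) := by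
  simp [ofProfile]

lemma coeff_ofProfile {a b : ℕ} (Q : Polynomial ℚ) {m : Fin 3 →₀ ℕ} (hm : m 2 ≤ g) :
    coeff m (ofProfile g a b Q) =
      if m 0 + m 2 = a ∧ m 1 + m 2 = b then coeffWeight g m * Q.eval (m 2 : ℚ) else 0 := by
  simp only [ofProfile_apply, coeff_sum, coeff_monomial]
  split_ifs with hab
  · obtain ⟨rfl, rfl⟩ := hab
    have hexp : expVec (m 0 + m 2 - m 2) (m 1 + m 2 - m 2) (m 2) = m :=
      expVec_eq_iff.2 ⟨Nat.add_sub_cancel .., Nat.add_sub_cancel .., rfl⟩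
    rw [Finset.sum_eq_single_of_mem (m 2) (Finset.mem_range.2 (by omega)) fun k _ hk =>
      if_neg fun h => hk (expVec_eq_iff.1 h).2.2, if_pos hexp, hexp]
  · refine Finset.sum_eq_zero fun k hk => if_neg fun h => hab ?_
    have := Finset.mem_range.1 hk
    obtain ⟨h0, h1, h2⟩ := expVec_eq_iff.1 h
    omega

lemma ofProfile_mem_profileSubmodule {a b : ℕ} {Q : Polynomial ℚ}
    (hQ : Q ∈ Polynomial.degreeLT ℚ (degBound g n a b)) :
    ofProfile g a b Q ∈ profileSubmodule g n := by
  intro a' b'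
  by_cases h : a' = a ∧ b' = b
  · obtain ⟨rfl, rfl⟩ := h
    exact ⟨Q, hQ, fun m ha hb hg => by rw [coeff_ofProfile Q hg, if_pos ⟨ha, hb⟩]⟩
  · refine ⟨0, zero_mem _, fun m ha hb hg => ?_⟩
    rw [coeff_ofProfile Q hg, ha, hb, if_neg h, Polynomial.eval_zero, mul_zero]

lemma ofProfile_descPochhammer_mul_eq_zero {a b t : ℕ} (ht : min a (min b g) < t)
    (W : Polynomial ℚ) : ofProfile g a b (descPochhammer ℚ t * W) = 0 := by
  rw [ofProfile_apply]
  refine Finset.sum_eq_zero fun k hk => ?_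
  have := Finset.mem_range.1 hk
  rw [Polynomial.eval_mul, descPochhammer_eval_coe_nat_of_lt (by omega), zero_mul, mul_zero,
    map_zero]

lemma coeffWeight_mul_eval_descPochhammer_mul_factorialRatio (g r s t i q : ℕ) :
    coeffWeight g (expVec r s (t + i)) * (descPochhammer ℚ t *
        factorialRatio ℚ (max (s + (t + i)) g) q).eval ((t + i : ℕ) : ℚ) =
      ((max (s + (t + i)) g - (t + i) + q).factorial : ℚ)
        / r.factorial / s.factorial / i.factorial * 2 ^ (t + i) := by
  have hdesc : (i.factorial : ℚ) * (descPochhammer ℚ t).eval ((t + i : ℕ) : ℚ)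
      = (t + i).factorial := by
    rw [descPochhammer_eval_eq_descFactorial]
    have := Nat.factorial_mul_descFactorial (Nat.le_add_right t i)
    rw [Nat.add_sub_cancel_left] at this
    exact_mod_cast this
  rw [← factorialRatio.eval_natCast_mul_factorial q (by omega), Polynomial.eval_mul]
  simp only [coeffWeight, expVec_zero, expVec_one, expVec_two]
  field_simp
  rw [← hdesc]
  ring

lemma rho_eq_ofProfile {r s t q : ℕ} (ht : t ≤ g)
    (hq : degBound g n (r + t) (s + t) = t + q + 1) :
    rho g n r s t =
      ofProfile g (r + t) (s + t) (descPochhammer ℚ t * factorialRatio ℚ (max (s + t) g) q) := by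
  rw [degBound] at hq
  rw [rho, ofProfile_apply,
    show min (r + t) (min (s + t) g) + 1 = t + (min r (min s (g - t)) + 1) by omega,
    Finset.sum_range_add _ t, Finset.sum_eq_zero (s := Finset.range t) fun k hk => ?_, zero_add]
  · refine Finset.sum_congr rfl fun i hi => ?_
    have := Finset.mem_range.1 hi
    obtain ⟨r, rfl⟩ : ∃ r', r = r' + i := ⟨r - i, by omega⟩
    obtain ⟨s, rfl⟩ : ∃ s', s = s' + i := ⟨s - i, by omega⟩
    rw [show r + i + t - (t + i) = r by omega, show s + i + t - (t + i) = s by omega,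
      show s + i + t = s + (t + i) by omega, coeffWeight_mul_eval_descPochhammer_mul_factorialRatio,
      show r + i + 3 * (s + i) + 2 * t + 2 - (2 * g + n) - i
        = max (s + (t + i)) g - (t + i) + q by omega,
      Nat.add_sub_cancel, Nat.add_sub_cancel, monomial_expVec, mul_pow, ← C_pow, C_mul]
    ring
  · rw [Polynomial.eval_mul, descPochhammer_eval_coe_nat_of_lt (Finset.mem_range.1 hk), zero_mul,
      mul_zero, map_zero]

lemma rho_mem_profileSubmodule {r s t : ℕ} (ht : t ≤ g)
    (hdeg : t < degBound g n (r + t) (s + t)) : rho g n r s t ∈ profileSubmodule g n := by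
  obtain ⟨q, hq⟩ := Nat.exists_eq_add_of_lt hdeg
  rw [rho_eq_ofProfile ht hq]
  refine ofProfile_mem_profileSubmodule (mem_degreeLT_of_natDegree_lt ?_)
  refine Polynomial.natDegree_mul_le.trans_lt ?_
  rw [descPochhammer_natDegree, factorialRatio.natDegree_eq]
  omega

lemma X_two_pow_mem_profileSubmodule : X 2 ^ (g + 1) ∈ profileSubmodule g n := by
  refine fun a b => ⟨0, zero_mem _, fun m _ _ hg => ?_⟩
  rw [X_pow_eq_monomial, coeff_monomial, if_neg, Polynomial.eval_zero, mul_zero]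
  rintro rfl
  simp at hg

lemma mem_profileSubmodule_of_mem_relIdeal {p : MvPolynomial (Fin 3) ℚ} (hp : p ∈ relIdeal g n) :
    p ∈ profileSubmodule g n := by
  induction hp using Submodule.span_induction with
  | mem p hp =>
    rcases hp with rfl | ⟨r, s, t, ht, h₁, h₂, rfl⟩
    · exact X_two_pow_mem_profileSubmodule
    · refine rho_mem_profileSubmodule ht ?_
      simp only [degBound]
      omega
  | zero => exact zero_mem _
  | add p q _ _ hp hq => exact add_mem hp hq
  | smul q p _ hp => exact mul_mem_profileSubmodule q hp

lemma rho_mem_relIdeal {r s t : ℕ} (ht : t ≤ g) (hdeg : t < degBound g n (r + t) (s + t)) :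
    rho g n r s t ∈ relIdeal g n := by
  rw [degBound] at hdeg
  exact Ideal.subset_span (Or.inr ⟨r, s, t, ht, by omega, by omega, rfl⟩)

lemma ofProfile_mem_relIdeal {a b : ℕ} {Q : Polynomial ℚ}
    (hQ : Q ∈ Polynomial.degreeLT ℚ (degBound g n a b)) : ofProfile g a b Q ∈ relIdeal g n := by
  let S := ((relIdeal g n).restrictScalars ℚ).comap (ofProfile g a b)
  suffices hle : Polynomial.degreeLT ℚ (degBound g n a b) ≤ S from hle hQ
  refine degreeLT_le_of_descPochhammer_mul_mem fun t ht => ?_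
  obtain ⟨q, hq⟩ := Nat.exists_eq_add_of_lt ht
  rcases le_or_gt t (min a (min b g)) with htm | htm
  · obtain ⟨r, rfl⟩ : ∃ r, a = r + t := ⟨a - t, by omega⟩
    obtain ⟨s, rfl⟩ : ∃ s, b = s + t := ⟨b - t, by omega⟩
    refine ⟨factorialRatio ℚ (max (s + t) g) q, mem_degreeLT_of_natDegree_lt ?_,
      factorialRatio.eval_natCast_ne_zero q (by omega), ?_⟩
    · rw [factorialRatio.natDegree_eq]
      omega
    · change ofProfile g (r + t) (s + t) _ ∈ relIdeal g n
      rw [← rho_eq_ofProfile (by omega) hq]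
      exact rho_mem_relIdeal (by omega) ht
  · refine ⟨1, mem_degreeLT_of_natDegree_lt ?_, by simp, ?_⟩
    · rw [Polynomial.natDegree_one]
      omega
    · change ofProfile g a b _ ∈ relIdeal g n
      rw [ofProfile_descPochhammer_mul_eq_zero htm]
      exact zero_mem _

lemma X_two_pow_dvd_sub_sum_ofProfile {p : MvPolynomial (Fin 3) ℚ} {P : ℕ → ℕ → Polynomial ℚ}
    (hP : ∀ a b, IsProfile g a b p (P a b)) :
    X 2 ^ (g + 1) ∣ p - ∑ ab ∈ p.support.image fun m => (m 0 + m 2, m 1 + m 2),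
      ofProfile g ab.1 ab.2 (P ab.1 ab.2) := by
  rw [X_pow_dvd_iff_forall_mem_support]
  intro m hm
  by_contra! hg
  rw [Nat.lt_succ_iff] at hg
  refine mem_support_iff.1 hm ?_
  rw [coeff_sub, sub_eq_zero, coeff_sum]
  by_cases hmem : (m 0 + m 2, m 1 + m 2) ∈ p.support.image fun m => (m 0 + m 2, m 1 + m 2)
  · rw [Finset.sum_eq_single_of_mem _ hmem fun ab _ hne => ?_, coeff_ofProfile _ hg,
      if_pos ⟨rfl, rfl⟩, hP _ _ m rfl rfl hg]
    rw [coeff_ofProfile _ hg, if_neg fun h => hne (Prod.ext h.1.symm h.2.symm)]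
  · rw [Finset.sum_eq_zero fun ab hab => ?_]
    · exact notMem_support_iff.1 fun h => hmem (Finset.mem_image_of_mem _ h)
    · rw [coeff_ofProfile _ hg, if_neg]
      rintro ⟨h₀, h₁⟩
      exact hmem (by rwa [h₀, h₁])

lemma mem_relIdeal_iff {p : MvPolynomial (Fin 3) ℚ} :
    p ∈ relIdeal g n ↔ p ∈ profileSubmodule g n := by
  refine ⟨mem_profileSubmodule_of_mem_relIdeal, fun hp => ?_⟩
  choose P hPdeg hP using hp
  have hγ : X 2 ^ (g + 1) ∈ relIdeal g n := Ideal.subset_span (Or.inl rfl)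
  rw [← sub_add_cancel p (∑ ab ∈ p.support.image fun m => (m 0 + m 2, m 1 + m 2),
    ofProfile g ab.1 ab.2 (P ab.1 ab.2))]
  exact add_mem (Ideal.mem_of_dvd _ (X_two_pow_dvd_sub_sum_ofProfile hP) hγ)
    (sum_mem fun ab _ => ofProfile_mem_relIdeal (hPdeg ab.1 ab.2))

end Relations

theorem statement19_general (g n l : ℕ) (x : MvPolynomial (Fin 3) ℚ)
    (hdeg : weightedTotalDegree ![2, 2, 4] x + l + 3 ≤ 3 * g + n)
    (hmem : x * X 0 ^ l ∈ relIdeal g n) : x ∈ relIdeal g n :=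
  mem_relIdeal_iff.2 (mem_profileSubmodule_of_mul_X_zero_pow_mem hdeg (mem_relIdeal_iff.1 hmem))

/-- Assign weights `2, 2, 4` to `α, β, γ`.  If `x ∈ ℚ[α,β,γ]` is
weighted-homogeneous of weight `w` with `0 ≤ w < 3g−3+n` and `x·α^{3g−3+n−w} ∈ I^g_n`,
then `x ∈ I^g_n`. -/
theorem statement19 (g n : ℕ) (x : MvPolynomial (Fin 3) ℚ) (w : ℕ)
    (hx : MvPolynomial.IsWeightedHomogeneous ![2, 2, 4] x w)
    (hw : (w : ℤ) < 3 * (g : ℤ) - 3 + n)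
    (hmem : x * X 0 ^ (3 * g + n - 3 - w) ∈ relIdeal g n) :
    x ∈ relIdeal g n := by
  have hdeg : weightedTotalDegree ![2, 2, 4] x ≤ w :=
    Finset.sup_le fun m hm => (hx (mem_support_iff.1 hm)).le
  exact statement19_general g n _ x (by omega) hmem

end Statement19
end
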